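/- arXiv:1312.2520 — 3 statements merged into one kernel-verified Lean document; each statement's English description precedes it below -/
import Mathlib

section
/- Let P be a finite bounded poset such that the m-cover poset P^⟨m⟩ is a lattice for every integer m > 0. Then for every integer m > 0 the lattice P^⟨m⟩ is left-modular if and only if P is (2+2)-free. -/
/-!
If some `P^⟨k⟩` with `k ≥ 2` is a lattice, the elements above any `p ≠ 0̂` form a chain: two upper
covers `q ≠ r` of `p` would leave the tuples `(p, q, …, q)` and `(p, r, …, r)` without a join.
For such a `P`, being (2+2)-free means that the elements which are neither `0̂` nor atoms form a
chain.

A maximal chain of `P^⟨m⟩` contains an atom `(0̂, …, 0̂, a)`, and its left-modularity forces `a`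
below every element that is neither `0̂` nor an atom, so that these elements lie on the chain
`[a, 1̂]`. Conversely, if they form a chain, extend it to a maximal chain `S` of `P`; the tuples
`(c, …, c, d, …, d)` with `c`, `d` equal or consecutive in `S` form a maximal chain of `P^⟨m⟩`, and
comparing coordinates shows that each of them is left-modular.
-/

/-- The defining shape of elements of the `m`-cover poset: a tuple consisting of
`l₀` copies of `⊥`, then `l₁` copies of `p₁`, then `l₂` copies of `p₂`,
where `p₁ ⋖ p₂` is a cover relation. -/
def IsMCoverTuple {α : Type*} [PartialOrder α] [OrderBot α] (m : ℕ) (f : Fin m → α) : Prop :=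
  ∃ (l₀ l₁ l₂ : ℕ) (p₁ p₂ : α), l₀ + l₁ + l₂ = m ∧ p₁ ⋖ p₂ ∧
    ∀ i : Fin m, f i = if (i : ℕ) < l₀ then ⊥ else if (i : ℕ) < l₀ + l₁ then p₁ else p₂

/-- The `m`-cover poset of `α`, as a subposet of the `m`-fold direct product `Fin m → α`
with the componentwise order. -/
abbrev MCover (α : Type*) [PartialOrder α] [OrderBot α] (m : ℕ) : Type _ :=
  {f : Fin m → α // IsMCoverTuple m f}

/-- A partial order is a lattice: any two elements have a least upper bound and a
greatest lower bound. -/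
def IsLatticeOrder (β : Type*) [PartialOrder β] : Prop :=
  (∀ a b : β, ∃ c, IsLUB {a, b} c) ∧ (∀ a b : β, ∃ c, IsGLB {a, b} c)

/-- An element `x` of a lattice is left-modular if `(y ∨ x) ∧ z = y ∨ (x ∧ z)` whenever
`y < z` (phrased via least upper bounds and greatest lower bounds). -/
def LeftModularElt {β : Type*} [PartialOrder β] (x : β) : Prop :=
  ∀ y z : β, y < z → ∀ jyx mxz lhs rhs : β,
    IsLUB {y, x} jyx → IsGLB {x, z} mxz →
    IsGLB {jyx, z} lhs → IsLUB {y, mxz} rhs → lhs = rhs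

/-- A lattice is left-modular if it has a maximal chain all of whose elements are
left-modular. -/
def IsLeftModularLattice (β : Type*) [PartialOrder β] : Prop :=
  ∃ C : Set β, IsMaxChain (· ≤ ·) C ∧ ∀ x ∈ C, LeftModularElt x

/-- Two elements are incomparable. -/
def Incomp {β : Type*} [Preorder β] (a b : β) : Prop := ¬ a ≤ b ∧ ¬ b ≤ a

/-- A poset is (2+2)-free if it contains no four elements `x < y` and `x' < y'` with each
of `x, y` incomparable to each of `x', y'`. -/
def TwoPlusTwoFree (β : Type*) [Preorder β] : Prop :=
  ¬ ∃ x y x' y' : β, x < y ∧ x' < y' ∧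
      Incomp x x' ∧ Incomp x y' ∧ Incomp y x' ∧ Incomp y y'

section CoverRelations

variable {β : Type*} [PartialOrder β]

theorem le_of_wcovBy_of_lt {a b c : β} (hab : a ⩿ b) (hac : a < c) (h : b ≤ c ∨ c ≤ b) : b ≤ c :=
  h.elim id fun hcb => (hcb.eq_or_lt.resolve_right (hab.2 hac)).ge

theorem exists_isAtom_mem_flag [Finite β] [BoundedOrder β] [Nontrivial β] (F : Flag β) :
    ∃ a ∈ F, IsAtom a := by
  have bot_lt_top' : (⊥ : F) < ⊤ := Subtype.coe_lt_coe.1 bot_lt_top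
  obtain ⟨a, ha, -⟩ := exists_covBy_le_of_lt bot_lt_top'
  exact ⟨a, a.2, bot_covBy_iff.1 (Flag.coe_covBy_coe.2 ha)⟩

end CoverRelations

section Pentagon

variable {β : Type*} [PartialOrder β] {x y z : β}

/-- `y < z` form one side of a pentagon whose other side is `x`: in a lattice, `x ∧ z ≤ y` and
`z ≤ x ∨ y`. The two inequalities are phrased through common bounds, so that the notion makes sense
in any partial order. -/
structure IsPentagon (x y z : β) : Prop where
  lt : y < z
  le_of_le_inf : ∀ ⦃w⦄, w ≤ x → w ≤ z → w ≤ y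
  le_of_sup_le : ∀ ⦃w⦄, x ≤ w → y ≤ w → z ≤ w

theorem leftModularElt_of_forall_not_isPentagon (hx : ∀ y z, ¬ IsPentagon x y z) :
    LeftModularElt x := by
  intro y z hyz j μ l r hj hμ hl hr
  obtain ⟨hyj, hxj⟩ : y ≤ j ∧ x ≤ j := by simpa using hj.1
  obtain ⟨hμx, hμz⟩ : μ ≤ x ∧ μ ≤ z := by simpa using hμ.1
  obtain ⟨hlj, hlz⟩ : l ≤ j ∧ l ≤ z := by simpa using hl.1
  obtain ⟨hyr, hμr⟩ : y ≤ r ∧ μ ≤ r := by simpa using hr.1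
  have hrl : r ≤ l := hr.2 (by simp [hl.2 (show y ∈ _ by simp [hyj, hyz.le]),
    hl.2 (show μ ∈ _ by simp [hμx.trans hxj, hμz])])
  by_contra hne
  refine hx r l ⟨hrl.lt_of_ne' hne, fun w hwx hwl => ?_, fun w hxw hrw => ?_⟩
  · exact (hμ.2 (by simp [hwx, hwl.trans hlz])).trans hμr
  · exact hlj.trans (hj.2 (by simp [hxw, hyr.trans hrw]))

theorem LeftModularElt.not_isPentagon (hx : LeftModularElt x) {j μ : β} (hj : IsLUB {y, x} j)
    (hμ : IsGLB {x, z} μ) : ¬ IsPentagon x y z := by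
  intro hP
  obtain ⟨hyj, hxj⟩ : y ≤ j ∧ x ≤ j := by simpa using hj.1
  obtain ⟨hμx, hμz⟩ : μ ≤ x ∧ μ ≤ z := by simpa using hμ.1
  have hzj : z ≤ j := hP.le_of_sup_le hxj hyj
  have hμy : μ ≤ y := hP.le_of_le_inf hμx hμz
  refine hP.lt.ne' (hx y z hP.lt j μ z y hj hμ ?_ ?_)
  · exact IsLeast.isGLB ⟨by simp, by simp [lowerBounds, hzj]⟩
  · exact IsGreatest.isLUB ⟨by simp, by simp [upperBounds, hμy]⟩

end Pentagon

section Tuples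

variable {α : Type*} [PartialOrder α] [OrderBot α] {m : ℕ}

theorem IsMCoverTuple.eq_bot_or_wcovBy {f : Fin m → α} (hf : IsMCoverTuple m f) {i j : Fin m}
    (hij : i ≤ j) : f i = ⊥ ∨ f i ⩿ f j := by
  obtain ⟨l₀, l₁, l₂, p₁, p₂, -, hp, hf⟩ := hf
  rw [hf i, hf j]
  rw [Fin.le_def] at hij
  split_ifs <;> first | omega | simp [hp.wcovBy]

theorem IsMCoverTuple.monotone {f : Fin m → α} (hf : IsMCoverTuple m f) : Monotone f :=
  fun _ _ hij => (hf.eq_bot_or_wcovBy hij).elim (fun h => h ▸ bot_le) WCovBy.le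

variable [Finite α] [Nontrivial α]

theorem isMCoverTuple_bot_step (k : ℕ) (q : α) :
    IsMCoverTuple m (fun i => if (i : ℕ) < k then ⊥ else q) := by
  rcases eq_or_ne q ⊥ with rfl | hq
  · obtain ⟨p, hp⟩ := exists_ne (⊥ : α)
    obtain ⟨c, hc, -⟩ := exists_covBy_le_of_lt (bot_lt_iff_ne_bot.2 hp)
    exact ⟨m, 0, 0, ⊥, c, rfl, hc, fun i => by simp⟩
  · obtain ⟨c, -, hc⟩ := exists_le_covBy_of_lt (bot_lt_iff_ne_bot.2 hq)
    refine ⟨min k m, 0, m - min k m, c, q, by omega, hc, fun i => ?_⟩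
    simp +contextual

theorem isMCoverTuple_step {p q : α} (hpq : p = ⊥ ∨ p ⩿ q) (k : ℕ) :
    IsMCoverTuple m (fun i => if (i : ℕ) < k then p else q) := by
  rcases hpq with rfl | hpq
  · exact isMCoverTuple_bot_step k q
  rcases wcovBy_iff_eq_or_covBy.1 hpq with rfl | hpq
  · simpa using isMCoverTuple_bot_step (m := m) 0 p
  · refine ⟨0, min k m, m - min k m, p, q, by omega, hpq, fun i => ?_⟩
    simp

namespace MCover

/-- The tuple whose first `k` entries are `p` and whose other entries are `q`. -/
def step (m k : ℕ) {p q : α} (hpq : p = ⊥ ∨ p ⩿ q) : MCover α m :=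
  ⟨fun i => if (i : ℕ) < k then p else q, isMCoverTuple_step hpq k⟩

@[simp]
theorem step_apply (k : ℕ) {p q : α} (hpq : p = ⊥ ∨ p ⩿ q) (i : Fin m) :
    (step m k hpq).1 i = if (i : ℕ) < k then p else q := rfl

/-- The tuple all of whose entries are `p`. -/
def const (m : ℕ) (p : α) : MCover α m := step m 0 (.inr (.refl p))

@[simp]
theorem const_apply (p : α) (i : Fin m) : (const m p).1 i = p := rfl

/-- The tuple with entry `p` from the index `t` on and `⊥` before it. -/
def tail (t : Fin m) (p : α) : MCover α m := step m t (.inl rfl : ⊥ = ⊥ ∨ ⊥ ⩿ p)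

theorem tail_apply (t : Fin m) (p : α) (i : Fin m) :
    (tail t p).1 i = if i < t then ⊥ else p := rfl

@[simp]
theorem tail_apply_self (t : Fin m) (p : α) : (tail t p).1 t = p := by simp [tail_apply]

theorem gc_tail_apply (t : Fin m) :
    GaloisConnection (tail t : α → MCover α m) (fun f => f.1 t) := by
  refine fun p f => ⟨fun h => by simpa using h t, fun h i => ?_⟩
  rcases lt_or_ge i t with hi | hi
  · simp [tail_apply, hi]
  · simpa [tail_apply, hi.not_gt] using h.trans (f.2.monotone hi)

theorem tail_le_tail_iff {t : Fin m} {p q : α} : tail t p ≤ tail t q ↔ p ≤ q := by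
  simpa using gc_tail_apply t p (tail t q)

theorem tail_lt_tail_iff {t : Fin m} {p q : α} : tail t p < tail t q ↔ p < q :=
  lt_iff_lt_of_le_iff_le' tail_le_tail_iff tail_le_tail_iff

theorem isLUB_tail {t : Fin m} {p q j : α} (hj : IsLUB {p, q} j) :
    IsLUB {tail t p, tail t q} (tail t j) := by
  simpa [Set.image_pair] using (gc_tail_apply t).isLUB_l_image hj

theorem isGLB_tail {t : Fin m} {p q μ : α} (hμ : IsGLB {p, q} μ) :
    IsGLB {tail t p, tail t q} (tail t μ) := by
  obtain ⟨hp, hq⟩ : μ ≤ p ∧ μ ≤ q := by simpa using hμ.1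
  refine ⟨by simp [tail_le_tail_iff, hp, hq], fun f hf i => ?_⟩
  obtain ⟨hfp, hfq⟩ : f ≤ tail t p ∧ f ≤ tail t q := by simpa using hf
  have hpi := hfp i
  have hqi := hfq i
  rw [tail_apply] at hpi hqi ⊢
  split_ifs at hpi hqi ⊢
  exacts [hpi, hμ.2 (by simp [hpi, hqi])]

theorem leftModularElt_of_tail {t : Fin m} {p : α}
    (hp : LeftModularElt (tail t p : MCover α m)) : LeftModularElt p := by
  intro y z hyz j μ l r hj hμ hl hr
  have h : tail t l = tail t r := hp _ _ (tail_lt_tail_iff.2 hyz) _ _ _ _ (isLUB_tail hj)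
    (isGLB_tail hμ) (isGLB_tail hl) (isLUB_tail hr)
  exact (tail_le_tail_iff.1 h.le).antisymm (tail_le_tail_iff.1 h.ge)

theorem le_step_succ {a b : α} (hab : a = ⊥ ∨ a ⩿ b) {t : Fin m} {f : MCover α m}
    (ha : f.1 t ≤ a) (hb : ∀ s, t ≤ s → f.1 s ≤ b) : f ≤ step m (t + 1) hab := by
  intro i
  rcases le_or_gt i t with hi | hi
  · simpa [Nat.lt_succ_iff, Fin.le_def.1 hi] using (f.2.monotone hi).trans ha
  · simpa [Nat.lt_succ_iff, (Fin.lt_def.1 hi).not_ge] using hb i hi.le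

end MCover

end Tuples

section Bounded

variable {α : Type*} [PartialOrder α] [BoundedOrder α] [Finite α] [Nontrivial α] {m : ℕ}

instance MCover.instBoundedOrder : BoundedOrder (MCover α m) where
  bot := MCover.const m ⊥
  bot_le f i := by simp
  top := MCover.const m ⊤
  le_top f i := by simp

theorem MCover.exists_eq_tail_of_isAtom {f : MCover α (m + 1)} (hf : IsAtom f) :
    ∃ a : α, IsAtom a ∧ f = tail (Fin.last m) a := by
  have tail_ne_bot {a : α} (ha : a ≠ ⊥) : tail (Fin.last m) a ≠ ⊥ := fun h =>
    ha ((tail_apply_self _ a).symm.trans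
      (congrArg (fun g : MCover α (m + 1) => g.1 (Fin.last m)) h))
  have hlast : f.1 (Fin.last m) ≠ ⊥ := fun h0 =>
    hf.1 (le_bot_iff.1 fun i => (f.2.monotone (Fin.le_last i)).trans h0.le)
  have hfa : f = tail (Fin.last m) (f.1 (Fin.last m)) :=
    ((hf.le_iff.1 ((gc_tail_apply _).l_u_le f)).resolve_left (tail_ne_bot hlast)).symm
  refine ⟨f.1 (Fin.last m), ⟨hlast, fun a ha => ?_⟩, hfa⟩
  by_contra ha0
  exact tail_ne_bot ha0 (hf.2 _ (hfa ▸ tail_lt_tail_iff.2 ha))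

theorem exists_tail_mem_of_isMaxChain {C : Set (MCover α (m + 1))} (hC : IsMaxChain (· ≤ ·) C) :
    ∃ a : α, IsAtom a ∧ MCover.tail (Fin.last m) a ∈ C := by
  have : Nontrivial (MCover α (m + 1)) :=
    ⟨⊥, ⊤, fun h => bot_ne_top (α := α) (congrArg (fun g : MCover α (m + 1) => g.1 0) h)⟩
  obtain ⟨f, hfC, hf⟩ := exists_isAtom_mem_flag (Flag.ofIsMaxChain C hC)
  obtain ⟨a, ha, rfl⟩ := MCover.exists_eq_tail_of_isAtom hf
  exact ⟨a, ha, hfC⟩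

end Bounded

/-- Every element other than `⊥` has a chain of elements above it; for a finite bounded poset this
says that the Hasse diagram without `⊥` is a tree rooted at `⊤`. -/
def IsTreeAboveBot (α : Type*) [PartialOrder α] [OrderBot α] : Prop :=
  ∀ p : α, p ≠ ⊥ → IsChain (· ≤ ·) (Set.Ici p)

/-- The elements that are neither `⊥` nor atoms. -/
def nonAtoms (α : Type*) [PartialOrder α] [OrderBot α] : Set α :=
  {q | ∃ p, p ≠ ⊥ ∧ p < q}

section Tree

variable {α : Type*} [PartialOrder α]

theorem isTreeAboveBot_of_covBy_unique [OrderBot α] [Finite α]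
    (hα : ∀ p q r : α, p ≠ ⊥ → p ⋖ q → p ⋖ r → q = r) : IsTreeAboveBot α := by
  intro p
  induction p using WellFoundedGT.induction with
  | ind p ih =>
    rintro hp x (hpx : p ≤ x) y (hpy : p ≤ y) hxy
    rcases hpx.eq_or_lt with rfl | hpx
    · exact .inl hpy
    rcases hpy.eq_or_lt with rfl | hpy
    · exact .inr hpx.le
    obtain ⟨u, hpu, hux⟩ := exists_covBy_le_of_lt hpx
    obtain ⟨v, hpv, hvy⟩ := exists_covBy_le_of_lt hpy
    obtain rfl := hα p u v hp hpu hpv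
    exact ih u hpu.lt (ne_bot_of_gt hpu.lt) hux hvy hxy

theorem covBy_unique_of_isLatticeOrder_mCover [OrderBot α] [Finite α] [Nontrivial α] {n : ℕ}
    (h : IsLatticeOrder (MCover α (n + 2))) {p q r : α} (hp : p ≠ ⊥) (hq : p ⋖ q) (hr : p ⋖ r) :
    q = r := by
  by_contra hne
  obtain ⟨s, hs⟩ := h.1 (MCover.step _ 1 (.inr hq.wcovBy)) (MCover.step _ 1 (.inr hr.wcovBy))
  obtain ⟨hqs, hrs⟩ : MCover.step _ 1 (.inr hq.wcovBy) ≤ s ∧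
    MCover.step _ 1 (.inr hr.wcovBy) ≤ s := by simpa using hs.1
  have hps₀ : p ≤ s.1 0 := by simpa using hqs 0
  have hqs₁ : q ≤ s.1 1 := by simpa using hqs 1
  have hrs₁ : r ≤ s.1 1 := by simpa using hrs 1
  have s_le_step {a b : α} (hab : a ⩿ b) (hpa : p ≤ a) (hqb : q ≤ b) (hrb : r ≤ b) :
      s ≤ MCover.step _ 1 (.inr hab) := by
    refine hs.2 ?_
    rintro w (rfl | rfl) i <;> simp only [MCover.step_apply] <;> split_ifs <;> assumption
  have s₀_wcovBy_s₁ : s.1 0 ⩿ s.1 1 :=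
    (s.2.eq_bot_or_wcovBy (Fin.zero_le 1)).resolve_left (ne_bot_of_le_ne_bot hp hps₀)
  -- A coatom `a` of `[p, s₁]` gives the upper bound `(a, s₁, …, s₁)`, so `s₀ = a`.
  have le_s₀_and_lt {d : α} (hpd : p ≤ d) (hds : d < s.1 1) : d ≤ s.1 0 ∧ s.1 0 < s.1 1 := by
    obtain ⟨a, hda, ha⟩ := exists_le_covBy_of_lt hds
    have hsa : s.1 0 ≤ a := by
      simpa using s_le_step ha.wcovBy (hpd.trans hda) hqs₁ hrs₁ 0
    exact ⟨hda.trans (hsa.eq_of_not_lt fun hlt => s₀_wcovBy_s₁.2 hlt ha.lt).ge,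
      hsa.trans_lt ha.lt⟩
  have lt_s₁ {d e : α} (hd : p ⋖ d) (he : p ⋖ e) (hde : d ≠ e) (hds : d ≤ s.1 1)
      (hes : e ≤ s.1 1) : d < s.1 1 :=
    hds.lt_of_ne fun h => hd.2 he.lt ((hes.trans h.ge).lt_of_ne hde.symm)
  obtain ⟨hqs₀, s₀_lt_s₁⟩ := le_s₀_and_lt hq.le (lt_s₁ hq hr hne hqs₁ hrs₁)
  obtain ⟨hrs₀, -⟩ := le_s₀_and_lt hr.le (lt_s₁ hr hq (Ne.symm hne) hrs₁ hqs₁)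
  exact s₀_lt_s₁.not_ge (by simpa using s_le_step (.refl (s.1 0)) hps₀ hqs₀ hrs₀ 1)

theorem isTreeAboveBot_of_isLatticeOrder_mCover [OrderBot α] [Finite α] [Nontrivial α] {k : ℕ}
    (hk : 2 ≤ k) (h : IsLatticeOrder (MCover α k)) : IsTreeAboveBot α := by
  obtain ⟨n, rfl⟩ := Nat.exists_eq_add_of_le' hk
  exact isTreeAboveBot_of_covBy_unique fun _ _ _ => covBy_unique_of_isLatticeOrder_mCover h

namespace IsTreeAboveBot

theorem exists_isLUB [BoundedOrder α] [Finite α] (hα : IsTreeAboveBot α) {s : Set α} {x : α}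
    (hxs : x ∈ s) (hx : x ≠ ⊥) : ∃ j, IsLUB s j := by
  obtain ⟨j, hj⟩ := (Set.toFinite (upperBounds s)).exists_minimal ⟨⊤, fun _ _ => le_top⟩
  exact ⟨j, hj.prop, fun b hb =>
    ((hα x hx).total (hj.prop hxs) (hb hxs)).elim id fun hbj => hj.le_of_le hb hbj⟩

theorem twoPlusTwoFree_iff [OrderBot α] (hα : IsTreeAboveBot α) :
    TwoPlusTwoFree α ↔ IsChain (· ≤ ·) (nonAtoms α) := by
  constructor
  · rintro hfree q ⟨p, hp, hpq⟩ q' ⟨p', hp', hpq'⟩ -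
    by_contra hne
    have hp_q' : ¬ p ≤ q' := fun hle => hne ((hα p hp).total hpq.le hle)
    have hp'_q : ¬ p' ≤ q := fun hle => hne ((hα p' hp').total hle hpq'.le)
    rw [not_or] at hne
    exact hfree ⟨p, q, p', q', hpq, hpq',
      ⟨fun hle => hp_q' (hle.trans hpq'.le), fun hle => hp'_q (hle.trans hpq.le)⟩,
      ⟨hp_q', fun hle => hne.2 (hle.trans hpq.le)⟩,
      ⟨fun hle => hne.1 (hle.trans hpq'.le), hp'_q⟩, hne⟩
  · rintro hchain ⟨x, y, x', y', hxy, hxy', hxx', -, -, hyy'⟩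
    have hy : y ∈ nonAtoms α := ⟨x, fun h0 => hxx'.1 (h0 ▸ bot_le), hxy⟩
    have hy' : y' ∈ nonAtoms α := ⟨x', fun h0 => hxx'.2 (h0 ▸ bot_le), hxy'⟩
    exact (hchain.total hy hy').elim hyy'.1 hyy'.2

theorem le_of_isAtom_of_leftModularElt [BoundedOrder α] [Finite α] (hα : IsTreeAboveBot α)
    {a y : α} (ha : IsAtom a) (hmod : LeftModularElt a) (hy : y ∈ nonAtoms α) : a ≤ y := by
  obtain ⟨x, hx, hxy⟩ := hy
  by_contra hay
  have inf_eq_bot {w : α} (hwa : w ≤ a) (hwy : w ≤ y) : w = ⊥ :=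
    (ha.le_iff.1 hwa).resolve_right fun h => hay (h ▸ hwy)
  obtain ⟨j, hj⟩ := hα.exists_isLUB (Set.mem_insert x {a}) hx
  refine hmod.not_isPentagon hj (z := y) (μ := ⊥) ⟨by simp, fun w hw => ?_⟩
    ⟨hxy, fun w hwa hwy => (inf_eq_bot hwa hwy).trans_le bot_le, fun w haw hxw => ?_⟩
  · exact (inf_eq_bot (hw (by simp)) (hw (by simp))).le
  · exact ((hα x hx).total hxy.le hxw).resolve_right fun hwy => hay (haw.trans hwy)

theorem apply_le_of_lt [OrderBot α] (hα : IsTreeAboveBot α) {m : ℕ} (f : MCover α m) {t s : Fin m}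
    (hts : t ≤ s) (hf : f.1 t ≠ ⊥) {u : α} (hu : f.1 t < u) : f.1 s ≤ u :=
  le_of_wcovBy_of_lt ((f.2.eq_bot_or_wcovBy hts).resolve_left hf) hu
    ((hα _ hf).total (f.2.monotone hts) hu.le)

end IsTreeAboveBot

end Tree

section StepChain

variable {α : Type*} [PartialOrder α] [OrderBot α] {m : ℕ}

namespace MCover

/-- The tuples `(c, …, c, d, …, d)` with `c`, `d` in `S` and `c ⩿ d`. The definition lists only
pairwise conditions on the entries, which together force this shape. -/
def stepChain (m : ℕ) (S : Set α) : Set (MCover α m) :=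
  {f | (∀ i, f.1 i ∈ S) ∧ ∀ ⦃i j⦄, i ≤ j → f.1 i ⩿ f.1 j}

theorem apply_le_of_mem_stepChain {S : Set α} (hS : IsChain (· ≤ ·) S) {f : MCover α m}
    (hf : f ∈ stepChain m S) {t s : Fin m} (hts : t ≤ s) {u : α} (hu : u ∈ S) (htu : f.1 t < u) :
    f.1 s ≤ u :=
  le_of_wcovBy_of_lt (hf.2 hts) htu (hS.total (hf.1 s) hu)

theorem isChain_stepChain {S : Set α} (hS : IsChain (· ≤ ·) S) :
    IsChain (· ≤ ·) (stepChain m S) := by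
  rintro f ⟨hfS, hf⟩ g ⟨hgS, hg⟩ -
  by_contra! hne
  obtain ⟨s, hs⟩ : ∃ s, ¬ f.1 s ≤ g.1 s := not_forall.1 hne.1
  obtain ⟨t, ht⟩ : ∃ t, ¬ g.1 t ≤ f.1 t := not_forall.1 hne.2
  have hs' : g.1 s < f.1 s := ((hS.total (hfS s) (hgS s)).resolve_left hs).lt_of_not_ge hs
  have ht' : f.1 t < g.1 t := ((hS.total (hgS t) (hfS t)).resolve_left ht).lt_of_not_ge ht
  rcases le_total s t with hst | hts
  · exact (hg hst).2 hs' ((f.2.monotone hst).trans_lt ht')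
  · exact (hf hts).2 ht' ((g.2.monotone hts).trans_lt hs')

theorem isMaxChain_stepChain [Finite α] [Nontrivial α] (F : Flag α) :
    IsMaxChain (· ≤ ·) (stepChain m (F : Set α)) := by
  refine ⟨isChain_stepChain F.chain_le, fun T hT hFT => hFT.antisymm fun f hfT => ?_⟩
  have le_or_ge_const (c : F) : (∀ i, f.1 i ≤ c) ∨ ∀ i, c ≤ f.1 i :=
    hT.total hfT (hFT (⟨fun _ => c.2, fun _ _ _ => .rfl⟩ : const m (c : α) ∈ stepChain m F))
  have hfF (i : Fin m) : f.1 i ∈ F :=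
    Flag.mem_iff_forall_le_or_ge.2 fun c hc => (le_or_ge_const ⟨c, hc⟩).imp (· i) (· i)
  refine ⟨hfF, fun i j hij => ?_⟩
  have wcovBy_in_flag : (⟨f.1 i, hfF i⟩ : F) ⩿ ⟨f.1 j, hfF j⟩ :=
    ⟨f.2.monotone hij, fun c hic hcj =>
      (le_or_ge_const c).elim (fun h => (h j).not_gt hcj) fun h => (h i).not_gt hic⟩
  exact Flag.coe_wcovBy_coe.2 wcovBy_in_flag

end MCover

end StepChain

section StepChainModular

variable {α : Type*} [PartialOrder α] [Finite α] [Nontrivial α] {m : ℕ}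

namespace IsPentagon

section OrderBot

variable [OrderBot α] {x y z : MCover α m}

theorem le_of_le_inf_apply (hP : IsPentagon x y z) {t : Fin m} {w : α} (hwx : w ≤ x.1 t)
    (hwz : w ≤ z.1 t) : w ≤ y.1 t :=
  (MCover.gc_tail_apply t).le_u <|
    hP.le_of_le_inf ((MCover.gc_tail_apply t).l_le hwx) ((MCover.gc_tail_apply t).l_le hwz)

theorem le_of_sup_le_apply (hP : IsPentagon x y z) {t : Fin m} {a b : α} (hab : a = ⊥ ∨ a ⩿ b)
    (hxa : x.1 t ≤ a) (hya : y.1 t ≤ a) (hxb : ∀ s, t ≤ s → x.1 s ≤ b)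
    (hyb : ∀ s, t ≤ s → y.1 s ≤ b) : z.1 t ≤ a := by
  simpa using hP.le_of_sup_le (MCover.le_step_succ hab hxa hxb) (MCover.le_step_succ hab hya hyb) t

theorem snd_apply_eq_bot_of_mem_stepChain (hP : IsPentagon x y z) (hα : IsTreeAboveBot α)
    {S : Set α} (hS : IsChain (· ≤ ·) S) (hSα : nonAtoms α ⊆ S) (hx : x ∈ MCover.stepChain m S)
    {t : Fin m} (ht : y.1 t < z.1 t) : y.1 t = ⊥ := by
  by_contra hy
  have hxz : x.1 t ≤ z.1 t := (hS.total (hx.1 t) (hSα ⟨_, hy, ht⟩)).resolve_right fun hle =>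
    ht.not_ge (hP.le_of_le_inf_apply hle le_rfl)
  have hxy : x.1 t ≤ y.1 t := hP.le_of_le_inf_apply le_rfl hxz
  obtain ⟨u, hu, -⟩ := exists_covBy_le_of_lt ht
  exact ht.not_ge <| hP.le_of_sup_le_apply (.inr hu.wcovBy) hxy le_rfl
    (fun s hts => MCover.apply_le_of_mem_stepChain hS hx hts (hSα ⟨_, hy, hu.lt⟩)
      (hxy.trans_lt hu.lt))
    fun s hts => hα.apply_le_of_lt y hts hy hu.lt

end OrderBot

variable [BoundedOrder α] {x y z : MCover α m}

theorem fst_apply_ne_bot (hP : IsPentagon x y z) {t : Fin m} (ht : y.1 t < z.1 t) (hy : y.1 t = ⊥) :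
    x.1 t ≠ ⊥ := fun hx =>
  ht.not_ge <| (hP.le_of_sup_le_apply (b := ⊤) (.inl rfl) hx.le hy.le (fun _ _ => le_top)
    fun _ _ => le_top).trans bot_le

/-- Here `z t` is an atom outside `F`. Its upper cover `u` lies in `F`, and `v`, the lower cover of
`u` in `F`, lies above `z t`, hence equals it. -/
theorem snd_apply_ne_bot_of_mem_stepChain (hP : IsPentagon x y z) (hα : IsTreeAboveBot α)
    {F : Flag α} (hF : nonAtoms α ⊆ F) (hx : x ∈ MCover.stepChain m (F : Set α))
    {t : Fin m} (ht : y.1 t < z.1 t) : y.1 t ≠ ⊥ := by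
  intro hy
  have hx₀ : x.1 t ≠ ⊥ := hP.fst_apply_ne_bot ht hy
  have hz₀ : z.1 t ≠ ⊥ := ne_bot_of_gt ht
  have hxz : ¬ x.1 t ≤ z.1 t := fun hle =>
    hx₀ (le_bot_iff.1 (hy ▸ hP.le_of_le_inf_apply le_rfl hle))
  have hzx : ¬ z.1 t ≤ x.1 t := fun hle => ht.not_ge (hP.le_of_le_inf_apply hle le_rfl)
  have hzF : z.1 t ∉ F := fun hmem => (F.le_or_le hmem (hx.1 t)).elim hzx hxz
  obtain ⟨u, hu, -⟩ := exists_covBy_le_of_lt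
    (lt_top_iff_ne_top.2 fun h : z.1 t = ⊤ => hxz (h ▸ le_top))
  have huF : u ∈ F := hF ⟨_, hz₀, hu.lt⟩
  have hxu : x.1 t < u := by
    refine lt_of_le_not_ge ?_ fun hle => hzx (hu.le.trans hle)
    exact (F.le_or_le (hx.1 t) huF).resolve_right fun hle => hzx (hu.le.trans hle)
  obtain ⟨v, hxv, hvu⟩ := exists_le_covBy_of_lt (a := (⟨x.1 t, hx.1 t⟩ : F)) (b := ⟨u, huF⟩) hxu
  have hvu : (v : α) ⋖ u := Flag.coe_covBy_coe.2 hvu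
  have hzv : z.1 t ≤ v := hP.le_of_sup_le_apply (.inr hvu.wcovBy) hxv (hy ▸ bot_le)
    (fun s hts => MCover.apply_le_of_mem_stepChain F.chain_le hx hts huF hxu)
    fun s hts => (hP.lt.le s).trans (hα.apply_le_of_lt z hts hz₀ hu.lt)
  exact hu.2 (hzv.lt_of_ne fun heq => hzF (heq ▸ v.2)) hvu.lt

end IsPentagon

theorem leftModularElt_of_mem_stepChain [BoundedOrder α] (hα : IsTreeAboveBot α) {F : Flag α}
    (hF : nonAtoms α ⊆ F) {x : MCover α m} (hx : x ∈ MCover.stepChain m (F : Set α)) :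
    LeftModularElt x := by
  refine leftModularElt_of_forall_not_isPentagon fun y z hP => ?_
  obtain ⟨-, t, ht⟩ := Pi.lt_def.1 (Subtype.coe_lt_coe.2 hP.lt)
  exact hP.snd_apply_ne_bot_of_mem_stepChain hα hF hx ht
    (hP.snd_apply_eq_bot_of_mem_stepChain hα F.chain_le hF hx ht)

end StepChainModular

theorem isLeftModularLattice_of_isEmpty {β : Type*} [PartialOrder β] [IsEmpty β] :
    IsLeftModularLattice β :=
  ⟨∅, ⟨IsChain.empty, fun _ _ _ => Subsingleton.elim _ _⟩, fun x => isEmptyElim x⟩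

theorem stmt_2_general {α : Type*} [Finite α] [PartialOrder α] [BoundedOrder α] {k : ℕ}
    (hk : 2 ≤ k) (h : IsLatticeOrder (MCover α k)) {m : ℕ} (hm : 0 < m) :
    IsLeftModularLattice (MCover α m) ↔ TwoPlusTwoFree α := by
  rcases subsingleton_or_nontrivial α with hα | hα
  · have : IsEmpty (MCover α m) :=
      ⟨fun ⟨_, _, _, _, p, q, _, hpq, _⟩ => hpq.ne (Subsingleton.elim p q)⟩
    exact iff_of_true isLeftModularLattice_of_isEmpty
      fun ⟨x, y, _, _, hxy, _⟩ => hxy.ne (Subsingleton.elim x y)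
  have htree : IsTreeAboveBot α := isTreeAboveBot_of_isLatticeOrder_mCover hk h
  rw [htree.twoPlusTwoFree_iff]
  constructor
  · rintro ⟨C, hC, hmod⟩
    obtain ⟨n, rfl⟩ := Nat.exists_eq_succ_of_ne_zero hm.ne'
    obtain ⟨a, ha, haC⟩ := exists_tail_mem_of_isMaxChain hC
    have hamod : LeftModularElt a := MCover.leftModularElt_of_tail (hmod _ haC)
    exact (htree a ha.1).mono fun q hq => htree.le_of_isAtom_of_leftModularElt ha hamod hq
  · intro hchain
    obtain ⟨F, hF⟩ := hchain.exists_subset_flag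
    exact ⟨_, MCover.isMaxChain_stepChain F, fun x => leftModularElt_of_mem_stepChain htree hF⟩

/-- If all the m-cover posets of `P` are lattices, then for every `m > 0` the lattice
`P^⟨m⟩` is left-modular if and only if `P` is (2+2)-free. -/
theorem stmt_2 {α : Type*} [Fintype α] [PartialOrder α] [BoundedOrder α]
    (h : ∀ m : ℕ, 0 < m → IsLatticeOrder (MCover α m)) :
    ∀ m : ℕ, 0 < m → (IsLeftModularLattice (MCover α m) ↔ TwoPlusTwoFree α) := fun _ hm =>
  stmt_2_general le_rfl (h 2 two_pos) hm
end

section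
/- For all integers m, n > 0, the m-Tamari lattice T_n^(m) is order-isomorphic to the Dedekind–MacNeille completion DM(T_n^⟨m⟩) of the m-cover poset T_n^⟨m⟩ of the Tamari lattice T_n = T_n^(1). -/
/-- The set `D_n^(m)` of m-Dyck paths of length `(m+1)n`, encoded as step sequences:
weakly increasing `u : Fin n → ℕ` with `u_k ≤ m(k−1)` (1-indexed), i.e. `u k ≤ m·k`
(0-indexed). -/
def DyckM (m n : ℕ) : Type :=
  {u : Fin n → ℕ // Monotone u ∧ ∀ k : Fin n, u k ≤ m * (k : ℕ)}

/-- The rotation cover relation on step sequences: `v` is obtained from `u` by choosing a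
position `i ≥ 2` (1-indexed; here `i ≥ 1`, 0-indexed) with `u_{i−1} < u_i` and
decreasing every entry of the primitive subsequence of `u` at position `i` (which ends
at position `k`) by one. -/
def RotCovBy (m n : ℕ) (u v : Fin n → ℕ) : Prop :=
  ∃ i k : Fin n, (0 : ℕ) < (i : ℕ) ∧ (i : ℕ) ≤ (k : ℕ) ∧
    (∀ j : Fin n, (j : ℕ) + 1 = (i : ℕ) → u j < u i) ∧
    (∀ j : Fin n, (i : ℕ) < (j : ℕ) → (j : ℕ) ≤ (k : ℕ) →
      u j - u i < m * ((j : ℕ) - (i : ℕ))) ∧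
    ((k : ℕ) + 1 = n ∨
      ∀ j : Fin n, (j : ℕ) = (k : ℕ) + 1 → m * ((j : ℕ) - (i : ℕ)) ≤ u j - u i) ∧
    (∀ j : Fin n, v j = if (i : ℕ) ≤ (j : ℕ) ∧ (j : ℕ) ≤ (k : ℕ) then u j - 1 else u j)

/-- The rotation order `≤_rot` on `D_n^(m)`: the reflexive-transitive closure of the
rotation cover relation.  The m-Tamari lattice is `T_n^(m) = (D_n^(m), ≤_rot)`. -/
def TamariLe (m n : ℕ) : DyckM m n → DyckM m n → Prop :=
  Relation.ReflTransGen (fun a b => RotCovBy m n a.1 b.1)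

/-- `b` covers `a` with respect to the relation `r` (playing the role of `≤`). -/
def RelCovBy {β : Type*} (r : β → β → Prop) (a b : β) : Prop :=
  r a b ∧ a ≠ b ∧ ∀ c, r a c → r c b → c = a ∨ c = b

/-- `x` is meet-irreducible w.r.t. the order relation `r`: non-maximal with exactly one
upper cover. -/
def RelMeetIrred {β : Type*} (r : β → β → Prop) (x : β) : Prop :=
  (∃ y, r x y ∧ x ≠ y) ∧ ∃! y, RelCovBy r x y

/-- `x` is join-irreducible w.r.t. the order relation `r`: non-minimal with exactly one
lower cover. -/
def RelJoinIrred {β : Type*} (r : β → β → Prop) (x : β) : Prop :=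
  (∃ y, r y x ∧ x ≠ y) ∧ ∃! y, RelCovBy r y x

/-- The defining shape of elements of the m-cover poset of the Tamari lattice `T_n`:
tuples `(0̂^{l₀}, p₁^{l₁}, p₂^{l₂})` with `p₁ ⋖ p₂` a cover relation of `T_n` and `0̂`
the least element of `T_n`. -/
def IsTamariCoverTuple (m n : ℕ) (f : Fin m → DyckM 1 n) : Prop :=
  ∃ (z : DyckM 1 n) (l₀ l₁ l₂ : ℕ) (p₁ p₂ : DyckM 1 n),
    (∀ x, TamariLe 1 n z x) ∧ l₀ + l₁ + l₂ = m ∧ RelCovBy (TamariLe 1 n) p₁ p₂ ∧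
    ∀ i : Fin m, f i = if (i : ℕ) < l₀ then z else if (i : ℕ) < l₀ + l₁ then p₁ else p₂

/-- The m-cover poset `T_n^⟨m⟩` of the Tamari lattice `T_n`. -/
def TamariMCover (m n : ℕ) : Type :=
  {f : Fin m → DyckM 1 n // IsTamariCoverTuple m n f}

/-- The componentwise order on the m-cover poset `T_n^⟨m⟩`. -/
def TamariMCoverLe (m n : ℕ) (f g : TamariMCover m n) : Prop :=
  ∀ i : Fin m, TamariLe 1 n (f.1 i) (g.1 i)

/-- For a set `A` in a poset with order relation `r`, the set of upper bounds of `A`. -/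
def relUpperBounds {β : Type*} (r : β → β → Prop) (A : Set β) : Set β :=
  {x | ∀ a ∈ A, r a x}

/-- For a set `A` in a poset with order relation `r`, the set of lower bounds of `A`. -/
def relLowerBounds {β : Type*} (r : β → β → Prop) (A : Set β) : Set β :=
  {x | ∀ a ∈ A, r x a}

/-- The Dedekind–MacNeille completion of the poset with carrier `β` and order `r`: the
sets `A` with `(A^u)^l = A`, ordered by inclusion. -/
def DMCut {β : Type*} (r : β → β → Prop) : Type _ :=
  {A : Set β // relLowerBounds r (relUpperBounds r A) = A}

/-!
Record an `m`-Dyck path by its bracket matrix `K`, where `K i s` is the last up step before the path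
first returns to `s` levels above the start of its `i`-th up step. A rotation only delays returns.
Conversely, if two different paths have matrices `K ≤ L`, then rotating the path of `K` at the first
step where the heights differ gives a matrix that is still below `L`. So the rotation order is the
componentwise order of matrices. The conditions on the entries of a bracket matrix survive infima,
which makes the matrices a complete lattice.

For `m = 1` the matrix is a single column, the bracket vector of the Tamari lattice. Covering
vectors differ in one entry only, so the columns of a tuple in the `m`-cover poset, read backwards,
form a bracket matrix. These matrices are join-dense and meet-dense among all bracket matrices, and
a complete lattice with a join-dense and meet-dense subposet is its Dedekind–MacNeille completion.
-/

section DedekindMacNeille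

variable {β : Type*} {r : β → β → Prop}

lemma relCovBy_iff_covBy {P : Type*} [PartialOrder P] (e : β ≃ P)
    (he : ∀ a b, r a b ↔ e a ≤ e b) {a b : β} : RelCovBy r a b ↔ e a ⋖ e b := by
  simp only [RelCovBy, covBy_iff_lt_and_eq_or_eq, lt_iff_le_and_ne, he, e.forall_congr_left,
    e.injective.ne_iff, and_assoc, ← e.apply_eq_iff_eq, e.apply_symm_apply]

instance DMCut.instPartialOrder : PartialOrder (DMCut r) :=
  PartialOrder.lift Subtype.val Subtype.val_injective

lemma relLowerBounds_relUpperBounds_setOf_le {L : Type*} [Preorder L] {φ : β → L}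
    (hφ : ∀ a b, r a b ↔ φ a ≤ φ b)
    (hmeet : ∀ ⦃x y⦄, ¬ x ≤ y → ∃ a, y ≤ φ a ∧ ¬ x ≤ φ a) (x : L) :
    relLowerBounds r (relUpperBounds r {a | φ a ≤ x}) = {a | φ a ≤ x} := by
  refine Set.Subset.antisymm (fun a ha => ?_) fun a ha b hb => hb a ha
  by_contra hax
  obtain ⟨b, hxb, hab⟩ := hmeet hax
  exact hab ((hφ a b).1 (ha b fun c hc => (hφ c b).2 (le_trans hc hxb)))

lemma setOf_le_sSup_image {L : Type*} [CompleteLattice L] {φ : β → L}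
    (hφ : ∀ a b, r a b ↔ φ a ≤ φ b) {A : Set β}
    (hA : relLowerBounds r (relUpperBounds r A) = A) : {a | φ a ≤ sSup (φ '' A)} = A := by
  refine Set.Subset.antisymm (fun a ha => ?_) fun a ha => le_sSup (Set.mem_image_of_mem φ ha)
  rw [← hA]
  refine fun b hb => (hφ a b).2 (le_trans ha (sSup_le ?_))
  rintro _ ⟨c, hc, rfl⟩
  exact (hφ c b).1 (hb c hc)

/-- The Dedekind–MacNeille completion is characterised as a completion: a complete lattice in which
`β` embeds join-densely and meet-densely is isomorphic to it. Density is stated as separation of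
`x` from `y` whenever `¬ x ≤ y`. -/
noncomputable def DMCut.orderIsoOfDense {L : Type*} [CompleteLattice L] {φ : β → L}
    (hφ : ∀ a b, r a b ↔ φ a ≤ φ b)
    (hjoin : ∀ ⦃x y⦄, ¬ x ≤ y → ∃ a, φ a ≤ x ∧ ¬ φ a ≤ y)
    (hmeet : ∀ ⦃x y⦄, ¬ x ≤ y → ∃ a, y ≤ φ a ∧ ¬ x ≤ φ a) : L ≃o DMCut r :=
  RelIso.ofSurjective
    (OrderEmbedding.ofMapLEIff
      (fun x => (⟨{a | φ a ≤ x}, relLowerBounds_relUpperBounds_setOf_le hφ hmeet x⟩ : DMCut r))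
      fun x y => by
        refine ⟨fun hxy => ?_, fun hxy a ha => le_trans ha hxy⟩
        by_contra hnot
        obtain ⟨a, hax, hay⟩ := hjoin hnot
        exact hay (hxy hax))
    fun A => ⟨sSup (φ '' A.1), Subtype.ext (setOf_le_sSup_image hφ A.2)⟩

end DedekindMacNeille

section BracketVector

variable {α : Type*}

/-- Bracket vectors, which encode the elements of the Tamari lattice (Huang–Tamari): the intervals
`[i, b i]` are pairwise nested or disjoint. -/
structure IsBracketVector [Preorder α] (b : α → α) : Prop where
  le_apply : ∀ i, i ≤ b i
  nested : ∀ ⦃i j⦄, i < j → j ≤ b i → b j ≤ b i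

/-- The poset of bracket vectors, ordered componentwise. -/
abbrev BracketVector (α : Type*) [Preorder α] : Type _ := {b : α → α // IsBracketVector b}

instance BracketVector.instOrderBot [Preorder α] : OrderBot (BracketVector α) where
  bot := ⟨id, fun _ => le_rfl, fun _ _ hij hji => absurd hij hji.not_gt⟩
  bot_le b := b.2.le_apply

lemma isBracketVector_update_id [PartialOrder α] [DecidableEq α] {i c : α} (hic : i ≤ c) :
    IsBracketVector (Function.update id i c) where
  le_apply j := by
    rcases eq_or_ne j i with rfl | hj
    · simpa using hic
    · simp [hj]
  nested j k hjk hk := by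
    rcases eq_or_ne j i with rfl | hj
    · simpa [hjk.ne'] using hk
    · rw [Function.update_of_ne hj] at hk
      exact absurd hjk hk.not_gt

lemma IsBracketVector.update [LinearOrder α] {p q : α → α} (hp : IsBracketVector p)
    (hq : IsBracketVector q) (hpq : p ≤ q) {i : α} (hi : ∀ j < i, p j = q j) :
    IsBracketVector (Function.update p i (q i)) where
  le_apply j := by
    rcases eq_or_ne j i with rfl | hj
    · simpa using hq.le_apply j
    · simpa [hj] using hp.le_apply j
  nested j k hjk hk := by
    rcases eq_or_ne j i with rfl | hj
    · rw [Function.update_self] at hk ⊢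
      rw [Function.update_of_ne hjk.ne']
      exact (hpq k).trans (hq.nested hjk hk)
    rw [Function.update_of_ne hj] at hk ⊢
    rcases eq_or_ne k i with rfl | hki
    · rw [Function.update_self, hi j hjk]
      exact hq.nested hjk (hi j hjk ▸ hk)
    · rw [Function.update_of_ne hki]
      exact hp.nested hjk hk

lemma BracketVector.eq_update_of_covBy [LinearOrder α] [WellFoundedLT α] {p q : BracketVector α}
    (h : p ⋖ q) : ∃ i, q.1 = Function.update p.1 i (q.1 i) := by
  have hpq : p.1 ≤ q.1 := h.le
  obtain ⟨i, hne, hmin⟩ : ∃ i, p.1 i ≠ q.1 i ∧ ∀ j < i, p.1 j = q.1 j := by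
    obtain ⟨i, hi⟩ := exists_minimal_of_wellFoundedLT (fun i => p.1 i ≠ q.1 i)
      (Function.ne_iff.1 (Subtype.coe_ne_coe.2 h.ne))
    exact ⟨i, hi.prop, fun j hj => not_not.1 (hi.not_prop_of_lt hj)⟩
  let c : BracketVector α := ⟨_, p.2.update q.2 hpq hmin⟩
  have hpc : p ≤ c := le_update_self_iff.2 (hpq i)
  have hcq : c ≤ q := update_le_iff.2 ⟨le_rfl, fun j _ => hpq j⟩
  have hcp : c ≠ p := fun hc => hne (by simpa [c] using (congrFun (congrArg Subtype.val hc) i).symm)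
  have hc : c = q := ((covBy_iff_lt_and_eq_or_eq.1 h).2 c hpc hcq).resolve_left hcp
  exact ⟨i, congrArg Subtype.val hc.symm⟩

lemma BracketVector.apply_le_of_covBy [LinearOrder α] [WellFoundedLT α] {p q : BracketVector α}
    (h : p ⋖ q) {i j : α} (hij : i < j) (hj : j ≤ p.1 i) : q.1 j ≤ p.1 i := by
  obtain ⟨k, hk⟩ := eq_update_of_covBy h
  have hne : ∀ l ≠ k, q.1 l = p.1 l := fun l hl => by rw [hk, Function.update_of_ne hl]
  rcases eq_or_ne i k with rfl | hik
  · rw [hne j hij.ne']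
    exact p.2.nested hij hj
  · rw [← hne i hik] at hj ⊢
    exact q.2.nested hij hj

open Classical in
/-- For an upper set `S`, the largest bracket vector whose entries at the positions in `S` up to `c`
are at most `c`. -/
noncomputable def cappedVector [LE α] [OrderTop α] (S : Set α) (c : α) (j : α) : α :=
  if j ∈ S ∧ j ≤ c then c else ⊤

section cappedVector

variable [LinearOrder α] [OrderTop α] {S : Set α} {i j c : α}

lemma cappedVector_of_mem (hS : j ∈ S) (hj : j ≤ c) : cappedVector S c j = c :=
  if_pos ⟨hS, hj⟩

lemma cappedVector_of_notMem (hS : j ∉ S) : cappedVector S c j = ⊤ :=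
  if_neg fun h => hS h.1

lemma cappedVector_of_lt (hj : c < j) : cappedVector S c j = ⊤ :=
  if_neg fun h => hj.not_ge h.2

lemma le_cappedVector_iff {x : α} : x ≤ cappedVector S c j ↔ (j ∈ S → j ≤ c → x ≤ c) := by
  unfold cappedVector
  split_ifs with h
  · exact ⟨fun hx _ _ => hx, fun hx => hx h.1 h.2⟩
  · exact ⟨fun _ hS hj => absurd ⟨hS, hj⟩ h, fun _ => le_top⟩

lemma isBracketVector_cappedVector (hS : IsUpperSet S) : IsBracketVector (cappedVector S c) where
  le_apply _ := le_cappedVector_iff.2 fun _ hj => hj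
  nested j k hjk hk := le_cappedVector_iff.2 fun hjS hjc => by
    rw [cappedVector_of_mem hjS hjc] at hk
    exact (cappedVector_of_mem (hS hjk.le hjS) hk).le

lemma cappedVector_Ioi_of_ne (hj : j ≠ i) :
    cappedVector (Set.Ioi i) c j = cappedVector (Set.Ici i) c j := by
  simp only [cappedVector, Set.mem_Ioi, Set.mem_Ici, lt_iff_le_and_ne, ne_eq, hj.symm,
    not_false_eq_true, and_true]

lemma cappedVector_Ici_covBy_cappedVector_Ioi (hic : i ≤ c) (hc : c < ⊤) :
    (⟨_, isBracketVector_cappedVector (c := c) (isUpperSet_Ici i)⟩ : BracketVector α) ⋖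
      ⟨_, isBracketVector_cappedVector (c := c) (isUpperSet_Ioi i)⟩ := by
  have hIci : cappedVector (Set.Ici i) c i = c := cappedVector_of_mem Set.self_mem_Ici hic
  have hIoi : cappedVector (Set.Ioi i) c i = ⊤ := cappedVector_of_notMem Set.self_notMem_Ioi
  constructor
  · refine Pi.lt_def.2 ⟨fun j => ?_, i, hIci.trans_lt (hc.trans_eq hIoi.symm)⟩
    rcases eq_or_ne j i with rfl | hj
    exacts [le_top.trans_eq hIoi.symm, (cappedVector_Ioi_of_ne hj).ge]
  · intro r hpr hrq
    obtain ⟨hle, j, hj⟩ := Pi.lt_def.1 (show cappedVector (Set.Ici i) c < r.1 from hpr)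
    obtain rfl : j = i := by
      by_contra hji
      exact hj.not_ge ((hrq.le j).trans_eq (cappedVector_Ioi_of_ne hji))
    rw [hIci] at hj
    have htop : ⊤ ≤ r.1 j := calc
      ⊤ = cappedVector (Set.Ici j) c (r.1 j) := (cappedVector_of_lt hj).symm
      _ ≤ r.1 (r.1 j) := hle _
      _ ≤ r.1 j := r.2.nested (hic.trans_lt hj) le_rfl
    refine hrq.not_ge fun k => ?_
    rcases eq_or_ne k j with rfl | hk
    exacts [le_top.trans htop, (cappedVector_Ioi_of_ne hk).trans_le (hle k)]

end cappedVector

end BracketVector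

section BracketMatrix

variable {α σ : Type*}

/-- Bracket matrices, which encode the elements of the `m`-Tamari lattice when `σ` has `m` elements:
the columns are bracket vectors that decrease from left to right, and nesting also holds between
different columns. -/
structure IsBracketMatrix [Preorder α] [Preorder σ] (K : α → σ → α) : Prop where
  le_apply : ∀ i s, i ≤ K i s
  antitone : ∀ i, Antitone (K i)
  nested : ∀ ⦃i j⦄ s t, i < j → j ≤ K i s → K j t ≤ K i s

/-- The poset of bracket matrices, ordered componentwise. -/
abbrev BracketMatrix (α σ : Type*) [Preorder α] [Preorder σ] : Type _ :=
  {K : α → σ → α // IsBracketMatrix K}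

/-- Bracket matrices with a single column are bracket vectors. -/
def BracketMatrix.orderIsoBracketVector [Preorder α] [Preorder σ] [Unique σ] :
    BracketMatrix α σ ≃o BracketVector α where
  toFun K := ⟨fun i => K.1 i default, fun i => K.2.le_apply i default,
    fun _ _ => K.2.nested default default⟩
  invFun b := ⟨fun i _ => b.1 i, fun i _ => b.2.le_apply i, fun _ _ _ _ => le_rfl,
    fun _ _ _ _ hij hj => b.2.nested hij hj⟩
  left_inv K := Subtype.ext (funext fun i => funext fun s => by rw [Subsingleton.elim s default])
  right_inv _ := rfl
  map_rel_iff' {K L} := ⟨fun h i s => Subsingleton.elim s default ▸ h i, fun h i => h i default⟩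

lemma isBracketMatrix_sInf [CompleteLattice α] [Preorder σ] {S : Set (α → σ → α)}
    (hS : ∀ K ∈ S, IsBracketMatrix K) : IsBracketMatrix (sInf S) := by
  have apply_le : ∀ K ∈ S, ∀ i s, sInf S i s ≤ K i s := fun K hK i s => sInf_le hK i s
  have le_sInf_apply : ∀ i s x, (∀ K ∈ S, x ≤ K i s) → x ≤ sInf S i s := fun i s x hx => by
    rw [sInf_apply, iInf_apply]
    exact le_iInf fun K => hx K K.2
  exact
    { le_apply i s := le_sInf_apply i s i fun K hK => (hS K hK).le_apply i s
      antitone i s t hst := le_sInf_apply i s _ fun K hK =>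
        (apply_le K hK i t).trans ((hS K hK).antitone i hst)
      nested i j s t hij hj := le_sInf_apply i s _ fun K hK =>
        (apply_le K hK j t).trans ((hS K hK).nested s t hij (hj.trans (apply_le K hK i s))) }

instance BracketMatrix.instInfSet [CompleteLattice α] [Preorder σ] :
    InfSet (BracketMatrix α σ) where
  sInf S := ⟨sInf (Subtype.val '' S), isBracketMatrix_sInf <| by rintro _ ⟨K, -, rfl⟩; exact K.2⟩

noncomputable instance BracketMatrix.instCompleteLattice [CompleteLattice α] [Preorder σ] :
    CompleteLattice (BracketMatrix α σ) :=
  completeLatticeOfInf _ fun _ => IsGLB.of_image Subtype.coe_le_coe (isGLB_sInf _)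

/-- The matrix with `a` columns `q`, followed by columns `p` up to index `b`, followed by columns
`id`; that is, an element of an `m`-cover poset read backwards. -/
def coverMatrix {m : ℕ} (p q : α → α) (a b : ℕ) (i : α) (s : Fin m) : α :=
  if (s : ℕ) < a then q i else if (s : ℕ) < b then p i else i

variable {m : ℕ}

lemma isBracketMatrix_coverMatrix [LinearOrder α] [WellFoundedLT α] {p q : BracketVector α}
    (h : p ⋖ q) (a b : ℕ) : IsBracketMatrix (coverMatrix (m := m) p.1 q.1 a b) := by
  have hpq : ∀ i, p.1 i ≤ q.1 i := h.le
  have hle : ∀ i (s : Fin m), coverMatrix p.1 q.1 a b i s ≤ q.1 i := fun i s => by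
    unfold coverMatrix
    split_ifs
    exacts [le_rfl, hpq i, q.2.le_apply i]
  refine ⟨fun i s => ?_, fun i s t hst => ?_, fun i j s t hij hj => (hle j t).trans ?_⟩
  · unfold coverMatrix
    split_ifs
    exacts [q.2.le_apply i, p.2.le_apply i, le_rfl]
  · have hp := p.2.le_apply i
    have hq := q.2.le_apply i
    have hpqi := hpq i
    unfold coverMatrix
    split_ifs <;> first | assumption | exact le_rfl | omega
  · unfold coverMatrix at hj ⊢
    split_ifs at hj ⊢
    · exact q.2.nested hij hj
    · exact BracketVector.apply_le_of_covBy h hij hj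
    · exact absurd hij hj.not_gt

lemma exists_coverMatrix_le_not_le [LinearOrder α] [Finite α] {K L : α → Fin m → α}
    (hK : IsBracketMatrix K) (hL : IsBracketMatrix L) (h : ¬ K ≤ L) :
    ∃ p q : BracketVector α, p ⋖ q ∧ ∃ a ≤ m,
      coverMatrix p.1 q.1 a a ≤ K ∧ ¬ coverMatrix p.1 q.1 a a ≤ L := by
  simp only [Pi.le_def, not_forall, not_le] at h
  obtain ⟨i, s, hs⟩ := h
  have hi : i < K i s := (hL.le_apply i s).trans_lt hs
  let q : BracketVector α := ⟨_, isBracketVector_update_id hi.le⟩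
  have hqi : q.1 i = K i s := Function.update_self ..
  obtain ⟨p, -, hpq⟩ := exists_le_covBy_of_lt (a := ⊥) (b := q) <|
    Pi.lt_def.2 ⟨q.2.le_apply, i, hqi ▸ hi⟩
  refine ⟨p, q, hpq, s + 1, s.2, fun j t => ?_, fun hle => ?_⟩
  · unfold coverMatrix
    split_ifs with ht
    · rcases eq_or_ne j i with rfl | hj
      · exact hqi ▸ hK.antitone j (Nat.lt_succ_iff.1 ht)
      · simpa [q, hj] using hK.le_apply j t
    · exact hK.le_apply j t
  · have := hle i s
    rw [coverMatrix, if_pos s.1.lt_succ_self, hqi] at this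
    exact hs.not_ge this

lemma exists_le_coverMatrix_not_le [LinearOrder α] [OrderTop α] {K L : α → Fin m → α}
    (hL : IsBracketMatrix L) (h : ¬ K ≤ L) :
    ∃ p q : BracketVector α, p ⋖ q ∧ ∃ a ≤ m,
      L ≤ coverMatrix p.1 q.1 a m ∧ ¬ K ≤ coverMatrix p.1 q.1 a m := by
  simp only [Pi.le_def, not_forall, not_le] at h
  obtain ⟨i, s, hs⟩ := h
  have hi : i ≤ L i s := hL.le_apply i s
  refine ⟨_, _, cappedVector_Ici_covBy_cappedVector_Ioi hi (hs.trans_le le_top), s, s.2.le,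
    fun j t => ?_, fun hle => ?_⟩
  · unfold coverMatrix
    split_ifs with hts htm
    · exact le_cappedVector_iff.2 fun hij hj => hL.nested s t hij hj
    · refine le_cappedVector_iff.2 fun hij hj => ?_
      rcases (Set.mem_Ici.1 hij).eq_or_lt with rfl | hij
      exacts [hL.antitone i (not_lt.1 hts), hL.nested s t hij hj]
    · exact absurd t.2 htm
  · have := hle i s
    rw [coverMatrix, if_neg (lt_irrefl _), if_pos s.2] at this
    exact hs.not_ge (this.trans_eq (cappedVector_of_mem Set.self_mem_Ici hi))

end BracketMatrix

namespace DyckM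

variable {m n : ℕ} {u v w : DyckM m n} {i j k l : Fin n}

/-- The height `m·i − u i` of the starting point of the `i`-th up step of the path with step
sequence `u`. -/
def height (u : DyckM m n) (i : Fin n) : ℕ := m * (i : ℕ) - u.1 i

lemma add_height (u : DyckM m n) (i : Fin n) : u.1 i + u.height i = m * (i : ℕ) :=
  Nat.add_sub_cancel' (u.2.2 i)

lemma ext_height (h : ∀ i, u.height i = v.height i) : u = v := by
  refine Subtype.ext (funext fun i => ?_)
  have hu := u.add_height i
  have hv := v.add_height i
  have := h i
  omega

lemma height_succ_le (u : DyckM m n) (hij : (j : ℕ) = i + 1) : u.height j ≤ u.height i + m := by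
  have hi := u.add_height i
  have hj := u.add_height j
  have hle : u.1 i ≤ u.1 j := u.2.1 (by omega)
  rw [hij, Nat.mul_add_one] at hj
  omega

lemma height_lt_height_iff (u : DyckM m n) (hij : i ≤ j) :
    u.height i < u.height j ↔ u.1 j - u.1 i < m * ((j : ℕ) - i) := by
  have hi := u.add_height i
  have hj := u.add_height j
  have hle := u.2.1 hij
  rw [Nat.mul_sub]
  omega

/-- The path has height greater than `u.height i + s` at all up steps after the `i`-th, up to the
`k`-th. -/
def StaysAbove (u : DyckM m n) (i : Fin n) (s : ℕ) (k : Fin n) : Prop :=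
  ∀ j, i < j → j ≤ k → u.height i + s < u.height j

lemma staysAbove_self (u : DyckM m n) (i : Fin n) (s : ℕ) : u.StaysAbove i s i :=
  fun _ hij hji => absurd hij hji.not_gt

lemma StaysAbove.mono {s : ℕ} (h : u.StaysAbove i s k) (hjk : j ≤ k) : u.StaysAbove i s j :=
  fun l hil hlj => h l hil (hlj.trans hjk)

lemma StaysAbove.trans {s t : ℕ} (hij : i < j) (hj : u.StaysAbove i s j)
    (hk : u.StaysAbove j t k) : u.StaysAbove i s k := by
  intro l hil hlk
  rcases le_or_gt l j with hlj | hjl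
  · exact hj l hil hlj
  · have := hj j hij le_rfl
    have := hk l hjl hlk
    omega

lemma exists_staysAbove_of_lt_height {c : ℕ} (hc : c < u.height j) :
    ∃ i < j, ∃ s : Fin m, u.height i + s = c ∧ u.StaysAbove i s j := by
  have height_zero (l : Fin n) (hl : (l : ℕ) = 0) : u.height l = 0 := by simp [height, hl]
  have hj : (j : ℕ) ≠ 0 := fun h => by simp [height_zero j h] at hc
  obtain ⟨i, ⟨hij, hic⟩, hmax⟩ := exists_maximal_of_wellFoundedGT
    (fun l : Fin n => l < j ∧ u.height l ≤ c)
    ⟨⟨0, by omega⟩, by rw [Fin.lt_def]; exact Nat.pos_of_ne_zero hj, by simp [height_zero]⟩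
  have habove : ∀ l, i < l → l ≤ j → c < u.height l := fun l hil hlj => by
    rcases hlj.eq_or_lt with rfl | hlj
    · exact hc
    · exact not_le.1 fun hle => hil.not_ge (hmax ⟨hlj, hle⟩ hil.le)
  have hstep : u.height ⟨i + 1, by omega⟩ ≤ u.height i + m := u.height_succ_le rfl
  have hnext : c < u.height ⟨i + 1, by omega⟩ :=
    habove _ (Nat.lt_succ_self i) (Nat.succ_le_of_lt hij)
  refine ⟨i, hij, ⟨c - u.height i, by omega⟩, by simp only; omega, fun l hil hlj => ?_⟩
  have := habove l hil hlj
  simp only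
  omega

open Classical in
/-- The bracket matrix of an `m`-Dyck path: the entry at `(i, s)` is the index of the last up step
before the path first returns to height `u.height i + s` after the `i`-th up step. -/
noncomputable def bracket (u : DyckM m n) (i : Fin n) (s : Fin m) : Fin n :=
  (Finset.univ.filter fun k => u.StaysAbove i s k).max' ⟨i, by simpa using u.staysAbove_self i s⟩

lemma le_bracket_iff {s : Fin m} : k ≤ u.bracket i s ↔ u.StaysAbove i s k := by
  classical
  have hmem := Finset.max'_mem (Finset.univ.filter fun k => u.StaysAbove i s k)
    ⟨i, by simpa using u.staysAbove_self i s⟩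
  exact ⟨(Finset.mem_filter.1 hmem).2.mono, fun h => Finset.le_max' _ _ (by simpa using h)⟩

lemma bracket_le_bracket_iff :
    u.bracket ≤ v.bracket ↔ ∀ i (s : Fin m) k, u.StaysAbove i s k → v.StaysAbove i s k := by
  simp only [← le_bracket_iff]
  exact ⟨fun h i s k hk => hk.trans (h i s), fun h i s => h i s _ le_rfl⟩

lemma height_le_of_eq_bracket_add_one {s : Fin m} (hl : (l : ℕ) = u.bracket i s + 1) :
    u.height l ≤ u.height i + s := by
  by_contra! hlt
  have : l ≤ u.bracket i s := le_bracket_iff.2 fun j hij hjl => by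
    rcases hjl.eq_or_lt with rfl | hjl
    · exact hlt
    · exact le_bracket_iff.1 le_rfl j hij (by omega)
  omega

lemma isBracketMatrix_bracket (u : DyckM m n) : IsBracketMatrix u.bracket where
  le_apply i s := le_bracket_iff.2 (u.staysAbove_self i s)
  antitone i s t hst := le_bracket_iff.2 fun j hij hj => by
    have := le_bracket_iff.1 hj j hij le_rfl
    omega
  nested _ _ _ _ hij hj :=
    le_bracket_iff.2 ((le_bracket_iff.1 hj).trans hij (le_bracket_iff.1 le_rfl))

lemma height_le_of_bracket_le (h : u.bracket ≤ v.bracket)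
    (hj : ∀ l < j, u.height l = v.height l) : u.height j ≤ v.height j := by
  by_contra! hlt
  obtain ⟨i, hij, s, hs, habove⟩ := exists_staysAbove_of_lt_height hlt
  have := bracket_le_bracket_iff.1 h i s j habove j hij le_rfl
  have := hj i hij
  omega

lemma bracket_injective : Function.Injective (bracket : DyckM m n → Fin n → Fin m → Fin n) := by
  intro u v h
  refine ext_height fun i => ?_
  induction i using WellFoundedLT.induction with
  | _ i ih =>
    exact le_antisymm (height_le_of_bracket_le h.le ih)
      (height_le_of_bracket_le h.ge fun l hl => (ih l hl).symm)

section Rotation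

/-- The path `v` arises from `u` by the rotation at position `i`, where the primitive subsequence of
`u` at `i` ends at `k`: the segment from `i` to `k` is raised by one. That `u_{i−1} < u_i` follows,
because `v` is a path. -/
structure IsRotation (u v : DyckM m n) (i k : Fin n) : Prop where
  le : i ≤ k
  staysAbove : u.StaysAbove i 0 k
  height_le : ∀ l : Fin n, (l : ℕ) = k + 1 → u.height l ≤ u.height i
  height_eq : ∀ j, v.height j = if i ≤ j ∧ j ≤ k then u.height j + 1 else u.height j

lemma height_eq_of_val_eq (hi : 0 < u.1 i)
    (hv : v.1 j = if i ≤ j ∧ j ≤ k then u.1 j - 1 else u.1 j) :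
    v.height j = if i ≤ j ∧ j ≤ k then u.height j + 1 else u.height j := by
  have := u.add_height j
  have := v.add_height j
  split_ifs at hv ⊢ with hj
  · have := u.2.1 hj.1
    omega
  · omega

lemma exists_isRotation_of_rotCovBy (h : RotCovBy m n u.1 v.1) : ∃ i k, IsRotation u v i k := by
  obtain ⟨i, k, hi, hik, hprev, hin, hend, hv⟩ := h
  have hpos : 0 < u.1 i := by
    have := hprev ⟨i - 1, by omega⟩ (Nat.sub_add_cancel hi)
    omega
  refine ⟨i, k, hik, fun j hij hjk => ?_, fun l hl => ?_, fun j => height_eq_of_val_eq hpos (hv j)⟩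
  · exact (u.height_lt_height_iff hij.le).2 (hin j hij hjk)
  · rw [← not_lt, u.height_lt_height_iff (by omega), not_lt]
    exact (hend.resolve_left (by omega)) l hl

lemma exists_isRotation (hi : 0 < u.1 i) (hlt : ∀ a < i, u.1 a < u.1 i) :
    ∃ v k, IsRotation u v i k := by
  have hm : 0 < m := Nat.pos_of_mul_pos_right (hi.trans_le (u.2.2 i))
  let k := u.bracket i ⟨0, hm⟩
  let v : DyckM m n := ⟨fun j => if i ≤ j ∧ j ≤ k then u.1 j - 1 else u.1 j, by
    refine ⟨fun a b hab => ?_, fun j => ?_⟩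
    · have huab := u.2.1 hab
      dsimp only
      split_ifs with ha hb hb
      · omega
      · omega
      · have := hlt a (by omega)
        have := u.2.1 hb.1
        omega
      · exact huab
    · have := u.2.2 j
      dsimp only
      split_ifs <;> omega⟩
  exact ⟨v, k, u.isBracketMatrix_bracket.le_apply i _, le_bracket_iff.1 le_rfl,
    fun l hl => height_le_of_eq_bracket_add_one hl, fun j => height_eq_of_val_eq hi rfl⟩

namespace IsRotation

lemma val_eq (h : IsRotation u v i k) (j : Fin n) :
    v.1 j = if i ≤ j ∧ j ≤ k then u.1 j - 1 else u.1 j := by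
  have hj := h.height_eq j
  have := u.add_height j
  have := v.add_height j
  split_ifs at hj ⊢ <;> omega

lemma height_eq_of_lt (h : IsRotation u v i k) (hj : j < i) : v.height j = u.height j := by
  rw [h.height_eq, if_neg fun hmem => hj.not_ge hmem.1]

lemma height_left_eq (h : IsRotation u v i k) : v.height i = u.height i + 1 := by
  rw [h.height_eq, if_pos ⟨le_rfl, h.le⟩]

lemma rotCovBy (h : IsRotation u v i k) : RotCovBy m n u.1 v.1 := by
  have hui : 0 < u.1 i := by
    have := h.height_left_eq
    have := u.add_height i
    have := v.add_height i
    omega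
  refine ⟨i, k, ?_, h.le, fun j hj => ?_, fun j hij hjk => ?_, ?_, h.val_eq⟩
  · exact Nat.pos_of_mul_pos_left (hui.trans_le (u.2.2 i))
  · have hle : v.1 j ≤ v.1 i := v.2.1 (by omega)
    rw [h.val_eq, h.val_eq, if_neg (by omega), if_pos ⟨le_rfl, h.le⟩] at hle
    omega
  · exact (u.height_lt_height_iff (le_of_lt hij)).1 (h.staysAbove j hij hjk)
  · refine or_iff_not_imp_left.2 fun _ j hj => ?_
    have hij : i ≤ j := by have := h.le; omega
    rw [← not_lt, ← u.height_lt_height_iff hij, not_lt]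
    exact h.height_le j hj

lemma height_left_le (h : IsRotation u v i k) (hij : i ≤ j) (hjk : j ≤ k) :
    u.height i ≤ u.height j := by
  rcases hij.eq_or_lt with rfl | hij
  exacts [le_rfl, (h.staysAbove j hij hjk).le]

lemma le_right_of_forall_lt_height (h : IsRotation u v i k) {c : ℕ} (hc : u.height i ≤ c)
    (hl : ∀ b, k < b → b ≤ l → c < u.height b) : l ≤ k := by
  by_contra! hkl
  have hkn : (k : ℕ) + 1 < n := by omega
  have := hl ⟨k + 1, hkn⟩ (Nat.lt_succ_self k) (Nat.succ_le_of_lt hkl)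
  have := h.height_le ⟨k + 1, hkn⟩ rfl
  omega

lemma bracket_le (h : IsRotation u v i k) : u.bracket ≤ v.bracket := by
  refine bracket_le_bracket_iff.2 fun a s l hl b hab hbl => ?_
  have hb := hl b hab hbl
  rw [h.height_eq a, h.height_eq b]
  by_cases ha : i ≤ a ∧ a ≤ k
  · have hia := h.height_left_le ha.1 ha.2
    have hlk : l ≤ k := h.le_right_of_forall_lt_height (hia.trans (Nat.le_add_right _ s))
      fun c hkc hcl => hl c (ha.2.trans_lt hkc) hcl
    rw [if_pos ha, if_pos ⟨ha.1.trans hab.le, hbl.trans hlk⟩]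
    omega
  · rw [if_neg ha]
    split_ifs <;> omega

/-- The rotation changes the bracket matrix only where a return to the level of the `i`-th up step
gets delayed until after the `k`-th. -/
lemma staysAbove_or (h : IsRotation u v i k) {a : Fin n} {s : ℕ} (hl : v.StaysAbove a s l) :
    u.StaysAbove a s l ∨ a < i ∧ i ≤ l ∧ l ≤ k := by
  rcases le_or_gt i a with hia | hai
  · refine Or.inl fun b hab hbl => ?_
    have hb := hl b hab hbl
    rw [h.height_eq a, h.height_eq b] at hb
    split_ifs at hb <;> omega
  refine or_iff_not_imp_right.2 fun hnot b hab hbl => ?_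
  have hb := hl b hab hbl
  rw [h.height_eq_of_lt hai] at hb
  by_cases hib : i ≤ b ∧ b ≤ k
  · suffices u.height a + s < u.height i from this.trans_le (h.height_left_le hib.1 hib.2)
    by_contra! hle
    refine hnot ⟨hai, hib.1.trans hbl, h.le_right_of_forall_lt_height hle fun c hkc hcl => ?_⟩
    have hc := hl c (hab.trans_le (hib.2.trans hkc.le)) hcl
    rwa [h.height_eq_of_lt hai, h.height_eq c, if_neg fun hmem => hkc.not_ge hmem.2] at hc
  · rwa [h.height_eq b, if_neg hib] at hb

lemma bracket_le_of_bracket_le (h : IsRotation u w i k) (huv : u.bracket ≤ v.bracket)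
    (heq : ∀ j < i, u.height j = v.height j) (hlt : u.height i < v.height i) :
    w.bracket ≤ v.bracket := by
  rw [bracket_le_bracket_iff] at huv ⊢
  intro a s l hl
  rcases h.staysAbove_or hl with hu | ⟨hai, hil, hlk⟩
  · exact huv a s l hu
  · have hva : v.StaysAbove a s i := fun b hab hbi => by
      have hb := hl b hab (hbi.trans hil)
      rw [h.height_eq_of_lt hai, heq a hai] at hb
      rcases hbi.eq_or_lt with rfl | hbi
      · rw [h.height_left_eq] at hb
        omega
      · rwa [h.height_eq_of_lt hbi, heq b hbi] at hb
    exact hva.trans hai (huv i ⟨0, s.pos⟩ l (h.staysAbove.mono hlk))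

end IsRotation

lemma exists_isRotation_bracket_le (h : u.bracket ≤ v.bracket) (hne : u ≠ v) :
    ∃ w i k, IsRotation u w i k ∧ w.bracket ≤ v.bracket := by
  obtain ⟨i, hi, hmin⟩ : ∃ i, u.height i ≠ v.height i ∧ ∀ j < i, u.height j = v.height j := by
    obtain ⟨i, hi⟩ := exists_minimal_of_wellFoundedLT (fun i => u.height i ≠ v.height i)
      (by by_contra! heq; exact hne (ext_height heq))
    exact ⟨i, hi.prop, fun j hj => not_not.1 (hi.not_prop_of_lt hj)⟩
  have hlt : u.height i < v.height i := (height_le_of_bracket_le h hmin).lt_of_ne hi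
  have hvu : v.1 i < u.1 i := by
    have := u.add_height i
    have := v.add_height i
    omega
  obtain ⟨w, k, hw⟩ := exists_isRotation hvu.pos fun j hj => by
    have := u.add_height j
    have := v.add_height j
    have := v.2.1 hj.le
    have := hmin j hj
    omega
  exact ⟨w, i, k, hw, hw.bracket_le_of_bracket_le h hmin hlt⟩

theorem tamariLe_iff_bracket_le : TamariLe m n u v ↔ u.bracket ≤ v.bracket := by
  constructor
  · intro h
    induction h with
    | refl => exact le_rfl
    | tail _ hcov ih =>
      obtain ⟨i, k, hrot⟩ := exists_isRotation_of_rotCovBy hcov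
      exact ih.trans hrot.bracket_le
  · intro h
    induction hK : u.bracket using WellFoundedGT.induction generalizing u with
    | _ K ih =>
      subst hK
      rcases eq_or_ne u v with rfl | hne
      · exact Relation.ReflTransGen.refl
      obtain ⟨w, i, k, hrot, hwv⟩ := exists_isRotation_bracket_le h hne
      have hlt : u.bracket < w.bracket := hrot.bracket_le.lt_of_ne fun heq => by
        have := hrot.height_left_eq
        rw [bracket_injective heq] at this
        omega
      exact .head hrot.rotCovBy (ih _ hlt hwv rfl)

end Rotation

section Realization

variable {K : Fin n → Fin m → Fin n}

/-- The `m`-Dyck path with bracket matrix `K`. The height of its `j`-th up step is the number of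
entries `K i s ≥ j` with `i < j`, so the `j`-th entry of the step sequence is the number of entries
of `K` below `j`. -/
def ofBracketMatrix (hK : IsBracketMatrix K) : DyckM m n where
  val j := Finset.card {x : Fin n × Fin m | K x.1 x.2 < j}
  property := by
    refine ⟨fun i j hij => Finset.card_le_card fun x hx => ?_, fun j => ?_⟩
    · simp only [Finset.mem_filter_univ] at hx ⊢
      exact hx.trans_le hij
    · calc Finset.card {x : Fin n × Fin m | K x.1 x.2 < j}
          ≤ (Finset.Iio j ×ˢ (Finset.univ : Finset (Fin m))).card :=
            Finset.card_le_card fun x hx => by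
              simp only [Finset.mem_filter_univ, Finset.mem_product, Finset.mem_Iio,
                Finset.mem_univ, and_true] at hx ⊢
              exact (hK.le_apply x.1 x.2).trans_lt hx
        _ = m * j := by simp [Nat.mul_comm]

lemma height_ofBracketMatrix (hK : IsBracketMatrix K) (j : Fin n) :
    (ofBracketMatrix hK).height j =
      Finset.card {x : Fin n × Fin m | x.1 < j ∧ j ≤ K x.1 x.2} := by
  have hsplit := Finset.card_filter_add_card_filter_not
    (s := Finset.Iio j ×ˢ (Finset.univ : Finset (Fin m))) fun x => K x.1 x.2 < j
  have hclosed : {x ∈ Finset.Iio j ×ˢ (Finset.univ : Finset (Fin m)) | K x.1 x.2 < j} =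
      ({x | K x.1 x.2 < j} : Finset (Fin n × Fin m)) := by
    ext x
    simpa using (hK.le_apply x.1 x.2).trans_lt
  have hopen : {x ∈ Finset.Iio j ×ˢ (Finset.univ : Finset (Fin m)) | ¬ K x.1 x.2 < j} =
      ({x | x.1 < j ∧ j ≤ K x.1 x.2} : Finset (Fin n × Fin m)) := by
    ext x
    simp
  rw [hclosed, hopen, Finset.card_product, Fin.card_Iio, Finset.card_univ, Fintype.card_fin,
    Nat.mul_comm, ← add_height (ofBracketMatrix hK) j] at hsplit
  exact (Nat.add_left_cancel hsplit).symm

lemma staysAbove_ofBracketMatrix (hK : IsBracketMatrix K) (i : Fin n) (s : Fin m) :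
    (ofBracketMatrix hK).StaysAbove i s (K i s) := by
  intro j hij hj
  rw [height_ofBracketMatrix, height_ofBracketMatrix]
  have hdisj : Disjoint ({x | x.1 < i ∧ i ≤ K x.1 x.2} : Finset (Fin n × Fin m))
      ({i} ×ˢ Finset.Iic s) := by
    refine Finset.disjoint_left.2 fun x hx hx' => ?_
    simp only [Finset.mem_filter_univ, Finset.mem_product, Finset.mem_singleton] at hx hx'
    exact hx.1.ne hx'.1
  calc Finset.card {x : Fin n × Fin m | x.1 < i ∧ i ≤ K x.1 x.2} + s
      < Finset.card {x : Fin n × Fin m | x.1 < i ∧ i ≤ K x.1 x.2} +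
          (({i} : Finset (Fin n)) ×ˢ Finset.Iic s).card := by simp
    _ = _ := (Finset.card_union_of_disjoint hdisj).symm
    _ ≤ Finset.card {x : Fin n × Fin m | x.1 < j ∧ j ≤ K x.1 x.2} :=
      Finset.card_le_card fun ⟨a, t⟩ hx => by
        simp only [Finset.mem_union, Finset.mem_filter_univ, Finset.mem_product,
          Finset.mem_singleton, Finset.mem_Iic] at hx ⊢
        rcases hx with ⟨hai, hi⟩ | ⟨rfl, hts⟩
        · exact ⟨hai.trans hij, hj.trans (hK.nested t s hai hi)⟩
        · exact ⟨hij, hj.trans (hK.antitone a hts)⟩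

lemma height_ofBracketMatrix_le (hK : IsBracketMatrix K) {s : Fin m}
    (hj : (j : ℕ) = K i s + 1) :
    (ofBracketMatrix hK).height j ≤ (ofBracketMatrix hK).height i + s := by
  have hij : i < j := by have := hK.le_apply i s; omega
  rw [height_ofBracketMatrix, height_ofBracketMatrix]
  calc Finset.card {x : Fin n × Fin m | x.1 < j ∧ j ≤ K x.1 x.2}
      ≤ (({x | x.1 < i ∧ i ≤ K x.1 x.2} : Finset (Fin n × Fin m)) ∪ {i} ×ˢ Finset.Iio s).card :=
      Finset.card_le_card fun ⟨a, t⟩ hx => by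
        simp only [Finset.mem_union, Finset.mem_filter_univ, Finset.mem_product,
          Finset.mem_singleton, Finset.mem_Iio] at hx ⊢
        obtain ⟨haj, hja⟩ := hx
        rcases lt_trichotomy a i with hai | rfl | hia
        · exact Or.inl ⟨hai, hij.le.trans hja⟩
        · refine Or.inr ⟨rfl, not_le.1 fun hst => ?_⟩
          have := hK.antitone a hst
          omega
        · have := hK.nested s t hia (by omega)
          omega
    _ ≤ _ := Finset.card_union_le _ _
    _ = Finset.card {x : Fin n × Fin m | x.1 < i ∧ i ≤ K x.1 x.2} + s := by simp

lemma bracket_ofBracketMatrix (hK : IsBracketMatrix K) : (ofBracketMatrix hK).bracket = K := by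
  refine funext fun i => funext fun s => le_antisymm ?_ ?_
  · by_contra! hlt
    have hlast : (K i s : ℕ) + 1 < n := by omega
    have hle := height_ofBracketMatrix_le hK (j := ⟨K i s + 1, hlast⟩) rfl
    refine hle.not_gt (le_bracket_iff.1 le_rfl _ ?_ (Nat.succ_le_of_lt hlt))
    exact Nat.lt_succ_of_le (hK.le_apply i s)
  · exact le_bracket_iff.2 (staysAbove_ofBracketMatrix hK i s)

end Realization

/-- The bracket matrix as a bijection from `m`-Dyck paths to bracket matrices, which by
`tamariLe_iff_bracket_le` is an isomorphism from the `m`-Tamari lattice. -/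
noncomputable def bracketEquiv : DyckM m n ≃ BracketMatrix (Fin n) (Fin m) where
  toFun u := ⟨u.bracket, u.isBracketMatrix_bracket⟩
  invFun K := ofBracketMatrix K.2
  left_inv _ := bracket_injective (bracket_ofBracketMatrix _)
  right_inv K := Subtype.ext (bracket_ofBracketMatrix K.2)

/-- The bracket vector of a Dyck path, as an isomorphism from the Tamari lattice. -/
noncomputable def bracketVectorEquiv : DyckM 1 n ≃ BracketVector (Fin n) :=
  bracketEquiv.trans BracketMatrix.orderIsoBracketVector.toEquiv

lemma tamariLe_iff_bracketVectorEquiv_le {u v : DyckM 1 n} :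
    TamariLe 1 n u v ↔ bracketVectorEquiv u ≤ bracketVectorEquiv v :=
  tamariLe_iff_bracket_le.trans (BracketMatrix.orderIsoBracketVector.map_rel_iff
    (a := bracketEquiv u) (b := bracketEquiv v)).symm

end DyckM

namespace TamariMCover

variable {m n : ℕ}

/-- The matrix whose columns are the bracket vectors of the components of an element of the
`m`-cover poset, in reverse order, because the columns of a bracket matrix decrease. -/
noncomputable def bracket (f : TamariMCover m n) (i : Fin n) (s : Fin m) : Fin n :=
  (DyckM.bracketVectorEquiv (f.1 s.rev)).1 i

lemma tamariMCoverLe_iff_bracket_le {f g : TamariMCover m n} :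
    TamariMCoverLe m n f g ↔ f.bracket ≤ g.bracket := by
  simp only [TamariMCoverLe, DyckM.tamariLe_iff_bracketVectorEquiv_le]
  refine ⟨fun h i s => h s.rev i, fun h s i => ?_⟩
  have := h i s.rev
  simpa only [bracket, Fin.rev_rev] using this

lemma exists_bracket_eq_iff {K : Fin n → Fin m → Fin n} :
    (∃ f : TamariMCover m n, f.bracket = K) ↔
      ∃ p q : BracketVector (Fin n), p ⋖ q ∧
        ∃ a b, a ≤ b ∧ b ≤ m ∧ coverMatrix p.1 q.1 a b = K := by
  have hcov := @relCovBy_iff_covBy _ _ _ _ DyckM.bracketVectorEquiv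
    (fun _ _ => DyckM.tamariLe_iff_bracketVectorEquiv_le (n := n))
  constructor
  · rintro ⟨⟨f, z, l₀, l₁, l₂, p, q, hz, hl, hpq, hf⟩, rfl⟩
    have hz' : DyckM.bracketVectorEquiv z = ⊥ := isBot_iff_eq_bot.1 <|
      DyckM.bracketVectorEquiv.forall_congr_right.1 fun x =>
        DyckM.tamariLe_iff_bracketVectorEquiv_le.1 (hz x)
    refine ⟨_, _, hcov.1 hpq, l₂, l₁ + l₂, by omega, by omega, ?_⟩
    ext i s : 2
    have := Fin.val_rev s
    simp only [bracket, coverMatrix, hf]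
    split_ifs <;> first | omega | rfl | (rw [hz']; rfl)
  · rintro ⟨p, q, hpq, a, b, hab, hbm, rfl⟩
    obtain ⟨p, rfl⟩ := DyckM.bracketVectorEquiv.surjective p
    obtain ⟨q, rfl⟩ := DyckM.bracketVectorEquiv.surjective q
    obtain ⟨z, hz⟩ := DyckM.bracketVectorEquiv.surjective (⊥ : BracketVector (Fin n))
    refine ⟨⟨fun s => if (s : ℕ) < m - b then z else if (s : ℕ) < m - b + (b - a) then p else q,
      z, m - b, b - a, a, p, q, fun x => ?_, by omega, hcov.2 hpq, fun _ => rfl⟩, ?_⟩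
    · rw [DyckM.tamariLe_iff_bracketVectorEquiv_le, hz]
      exact bot_le
    · ext i s : 2
      have := Fin.val_rev s
      simp only [bracket, coverMatrix]
      split_ifs <;> first | omega | rfl | (rw [hz]; rfl)

lemma isBracketMatrix_bracket (f : TamariMCover m n) : IsBracketMatrix f.bracket := by
  obtain ⟨p, q, hpq, a, b, -, -, hf⟩ := exists_bracket_eq_iff.1 ⟨f, rfl⟩
  exact hf ▸ isBracketMatrix_coverMatrix hpq a b

/-- The order embedding of the `m`-cover poset into the lattice of bracket matrices. -/
noncomputable def bracketMatrix (f : TamariMCover m n) : BracketMatrix (Fin n) (Fin m) :=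
  ⟨f.bracket, f.isBracketMatrix_bracket⟩

variable {K L : BracketMatrix (Fin n) (Fin m)}

lemma exists_bracketMatrix_le_not_le (h : ¬ K ≤ L) :
    ∃ f : TamariMCover m n, f.bracketMatrix ≤ K ∧ ¬ f.bracketMatrix ≤ L := by
  obtain ⟨p, q, hpq, a, ha, hK, hL⟩ := exists_coverMatrix_le_not_le K.2 L.2 h
  obtain ⟨f, hf⟩ := exists_bracket_eq_iff.2 ⟨p, q, hpq, a, a, le_rfl, ha, rfl⟩
  rw [← hf] at hK hL
  exact ⟨f, hK, hL⟩

lemma exists_le_bracketMatrix_not_le (h : ¬ K ≤ L) :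
    ∃ f : TamariMCover m n, L ≤ f.bracketMatrix ∧ ¬ K ≤ f.bracketMatrix := by
  obtain ⟨i, -⟩ := not_forall.1 h
  have : NeZero n := ⟨i.pos.ne'⟩
  obtain ⟨p, q, hpq, a, ha, hL, hK⟩ := exists_le_coverMatrix_not_le L.2 h
  obtain ⟨f, hf⟩ := exists_bracket_eq_iff.2 ⟨p, q, hpq, a, m, ha, le_rfl, rfl⟩
  rw [← hf] at hL hK
  exact ⟨f, hL, hK⟩

end TamariMCover

/-- The m-Tamari lattice `T_n^(m)` is order-isomorphic to the Dedekind–MacNeille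
completion of the m-cover poset `T_n^⟨m⟩` of the Tamari lattice `T_n`. -/
theorem stmt_4 (m n : ℕ) (hm : 0 < m) (hn : 0 < n) :
    ∃ e : DyckM m n ≃ DMCut (TamariMCoverLe m n),
      ∀ x y : DyckM m n, TamariLe m n x y ↔ (e x).1 ⊆ (e y).1 := by
  have : NeZero n := ⟨hn.ne'⟩
  let cuts : BracketMatrix (Fin n) (Fin m) ≃o DMCut (TamariMCoverLe m n) :=
    DMCut.orderIsoOfDense (φ := TamariMCover.bracketMatrix)
      (fun _ _ => TamariMCover.tamariMCoverLe_iff_bracket_le)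
      (fun _ _ => TamariMCover.exists_bracketMatrix_le_not_le)
      (fun _ _ => TamariMCover.exists_le_bracketMatrix_not_le)
  refine ⟨DyckM.bracketEquiv.trans cuts.toEquiv, fun x y => ?_⟩
  calc TamariLe m n x y
      ↔ DyckM.bracketEquiv x ≤ DyckM.bracketEquiv y := DyckM.tamariLe_iff_bracket_le
    _ ↔ cuts (DyckM.bracketEquiv x) ≤ cuts (DyckM.bracketEquiv y) := cuts.le_iff_le.symm
end

section
/- Let k, l, m > 0 be integers. In the m-cover poset P_{k,l}^⟨m⟩ of the poset P_{k,l}, for every j ≥ 0 the number of elements having exactly j upper covers equals the coefficient of t^j in the polynomial 1 + (k+l)m·t + (k+l)·C(m,2)·t² + m·t^{l+1}, and the number of elements having exactly j lower covers equals the coefficient of t^j in the same polynomial (here C(m,2) is the binomial coefficient m choose 2). -/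
/-- An `l`-element antichain: `Fin l` with the discrete order. -/
def Anti (l : ℕ) : Type := Fin l

instance (l : ℕ) : PartialOrder (Anti l) where
  le a b := a = b
  le_refl _ := rfl
  le_trans a b c h h' := (show a = b from h).trans (show b = c from h')
  le_antisymm _ _ h _ := h

/-- The bounded poset `P_{k,l}` whose proper part is the disjoint union of a `k`-chain
and an `l`-antichain. -/
abbrev PKL (k l : ℕ) : Type := WithBot (WithTop (Fin k ⊕ Anti l))

/-- The elements `c₀ = ⊥ < c₁ < ⋯ < c_k < c_{k+1} = ⊤` of `P_{k,l}`. -/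
def cElt (k l : ℕ) (i : ℕ) : PKL k l :=
  if h0 : i = 0 then ⊥
  else if h : i ≤ k then
    (((Sum.inl ⟨i - 1, by omega⟩ : Fin k ⊕ Anti l) : WithTop (Fin k ⊕ Anti l)) : PKL k l)
  else (⊤ : PKL k l)

/-!
If the proper part of the poset is a disjoint union of chains, every element of the `m`-cover poset
is `(⊥^a, p^(b - a), q^(m - b))` with `a < b ≤ m` for a proper `p ⋖ q`, or `(⊥^a, ⊤^(m - a))`.
The former has two upper covers, which raise its last `⊥` or its last `p`, but only one if `a = 0`;
and two lower covers, which lower its first `p` or its first `q`, but only one if `b = m`. The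
latter has as many upper (lower) covers as there are atoms, which are as numerous as the coatoms,
unless it is the greatest (least) element. So every proper `p` contributes `m t + C(m, 2) t²` to
both generating functions, and the elements `(⊥^a, ⊤^(m - a))` contribute `1 + m t ^ #atoms`.
-/

theorem eq_of_forall_fin_lt_iff {m a b : ℕ} (ha : a ≤ m) (hb : b ≤ m)
    (h : ∀ i : Fin m, (i : ℕ) < a ↔ (i : ℕ) < b) : a = b := by
  by_contra hab
  have := h ⟨min a b, by omega⟩
  grind

section Covers

variable {β ι : Type*} [PartialOrder β] {x s t : β}

theorem card_upperCovers_of_isMax (hx : IsMax x) : Nat.card {y // x ⋖ y} = 0 :=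
  Nat.card_eq_zero.2 <| .inl ⟨fun y => hx.not_lt y.2.lt⟩

theorem card_lowerCovers_of_isMin (hx : IsMin x) : Nat.card {y // y ⋖ x} = 0 :=
  Nat.card_eq_zero.2 <| .inl ⟨fun y => hx.not_lt y.2.lt⟩

theorem card_upperCovers_eq_card (f : ι → β) (hf : ∀ i j, f i ≤ f j → i = j)
    (hlt : ∀ i, x < f i) (hle : ∀ y, x < y → ∃ i, f i ≤ y) :
    Nat.card {y // x ⋖ y} = Nat.card ι := by
  have hcov (i) : x ⋖ f i := ⟨hlt i, fun z hxz hzi => by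
    obtain ⟨j, hjz⟩ := hle z hxz
    obtain rfl := hf j i (hjz.trans hzi.le)
    exact hzi.not_ge hjz⟩
  refine (Nat.card_congr (Equiv.ofBijective (fun i => ⟨f i, hcov i⟩) ⟨?_, ?_⟩)).symm
  · exact fun i j hij => hf i j (congrArg Subtype.val hij).le
  · rintro ⟨y, hxy⟩
    obtain ⟨i, hiy⟩ := hle y hxy.lt
    exact ⟨i, Subtype.ext (hiy.eq_of_not_lt (hxy.2 (hlt i)))⟩

theorem card_lowerCovers_eq_card (f : ι → β) (hf : ∀ i j, f i ≤ f j → i = j)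
    (hlt : ∀ i, f i < x) (hle : ∀ y, y < x → ∃ i, y ≤ f i) :
    Nat.card {y // y ⋖ x} = Nat.card ι := by
  rw [← card_upperCovers_eq_card (β := βᵒᵈ) (x := OrderDual.toDual x)
    (fun i => OrderDual.toDual (f i)) (fun i j h => (hf j i h).symm) hlt hle]
  exact Nat.card_congr (OrderDual.toDual.subtypeEquiv fun _ => toDual_covBy_toDual_iff.symm)

theorem card_upperCovers_eq_one (hs : x < s) (hle : ∀ y, x < y → s ≤ y) :
    Nat.card {y // x ⋖ y} = 1 := by
  rw [card_upperCovers_eq_card (fun _ : Unit => s) (fun _ _ _ => rfl) (fun _ => hs)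
    fun y hy => ⟨(), hle y hy⟩, Nat.card_unique]

theorem card_upperCovers_eq_two (hs : x < s) (ht : x < t) (hst : ¬ s ≤ t) (hts : ¬ t ≤ s)
    (hle : ∀ y, x < y → s ≤ y ∨ t ≤ y) : Nat.card {y // x ⋖ y} = 2 := by
  rw [card_upperCovers_eq_card ![s, t] (by simp [Fin.forall_fin_two, hst, hts])
    (by simp [Fin.forall_fin_two, hs, ht]) (by simpa [Fin.exists_fin_two] using hle), Nat.card_fin]

theorem card_lowerCovers_eq_two (hs : s < x) (ht : t < x) (hst : ¬ s ≤ t) (hts : ¬ t ≤ s)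
    (hle : ∀ y, y < x → y ≤ s ∨ y ≤ t) : Nat.card {y // y ⋖ x} = 2 := by
  rw [card_lowerCovers_eq_card ![s, t] (by simp [Fin.forall_fin_two, hst, hts])
    (by simp [Fin.forall_fin_two, hs, ht]) (by simpa [Fin.exists_fin_two] using hle), Nat.card_fin]

end Covers

/-- In a finite bounded poset: the proper part is a disjoint union of chains, expressed by saying
that only `⊥` may have several upper covers and only `⊤` may have several lower covers. -/
structure IsChainSum (α : Type*) [PartialOrder α] [BoundedOrder α] : Prop where
  upperCover_unique : ∀ ⦃x y z : α⦄, x ≠ ⊥ → x ⋖ y → x ⋖ z → y = z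
  lowerCover_unique : ∀ ⦃x y z : α⦄, x ≠ ⊤ → y ⋖ x → z ⋖ x → y = z

namespace IsChainSum

variable {α : Type*} [PartialOrder α] [BoundedOrder α] {x y z : α}

theorem covBy_le_of_lt [IsStronglyAtomic α] (h : IsChainSum α) (hx : x ≠ ⊥) (hxy : x ⋖ y)
    (hxz : x < z) : y ≤ z := by
  obtain ⟨w, hxw, hwz⟩ := exists_covBy_le_of_lt hxz
  exact (h.upperCover_unique hx hxy hxw).trans_le hwz

theorem card_upperCovers [IsStronglyAtomic α] (h : IsChainSum α) (hx : x ≠ ⊥) (hx' : x ≠ ⊤) :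
    Nat.card {y // x ⋖ y} = 1 := by
  obtain ⟨y, hxy, -⟩ := exists_covBy_le_of_lt hx'.lt_top
  exact card_upperCovers_eq_one hxy.lt fun z => h.covBy_le_of_lt hx hxy

theorem card_lowerCovers [IsStronglyCoatomic α] (h : IsChainSum α) (hx : x ≠ ⊥) (hx' : x ≠ ⊤) :
    Nat.card {y // y ⋖ x} = 1 := by
  obtain ⟨y, -, hyx⟩ := exists_le_covBy_of_lt hx.bot_lt
  have : Unique {y // y ⋖ x} :=
    ⟨⟨y, hyx⟩, fun z => Subtype.ext (h.lowerCover_unique hx' z.2 hyx)⟩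
  exact Nat.card_unique

theorem card_coatoms_eq_card_atoms [Finite α] [Nontrivial α] (h : IsChainSum α) :
    Nat.card {x : α // x ⋖ ⊤} = Nat.card {x : α // ⊥ ⋖ x} := by
  classical
  have := Fintype.ofFinite α
  have hcount : ∑ x : α, Nat.card {y // x ⋖ y} = ∑ x : α, Nat.card {y // y ⋖ x} := by
    simpa only [Nat.card_eq_fintype_card, Fintype.card_subtype,
      Finset.bipartiteAbove, Finset.bipartiteBelow] using
      Finset.sum_card_bipartiteAbove_eq_sum_card_bipartiteBelow (s := .univ) (t := .univ)
        (fun x y : α => x ⋖ y)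
  have hproper : ∑ x ∈ ({⊥, ⊤} : Finset α)ᶜ, Nat.card {y // x ⋖ y} =
      ∑ x ∈ ({⊥, ⊤} : Finset α)ᶜ, Nat.card {y // y ⋖ x} := by
    refine Finset.sum_congr rfl fun x hx => ?_
    simp only [Finset.mem_compl, Finset.mem_insert, Finset.mem_singleton, not_or] at hx
    rw [h.card_upperCovers hx.1 hx.2, h.card_lowerCovers hx.1 hx.2]
  rw [← Finset.sum_add_sum_compl {⊥, ⊤}, ← Finset.sum_add_sum_compl {⊥, ⊤}, hproper,
    Finset.sum_pair bot_ne_top, Finset.sum_pair bot_ne_top, card_upperCovers_of_isMax isMax_top,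
    card_lowerCovers_of_isMin isMin_bot] at hcount
  omega

end IsChainSum

namespace MCover

section OrderBot

variable {α : Type*} [PartialOrder α] [OrderBot α] {m : ℕ} {p q v : α} {a b : ℕ}

theorem eq_bot_or_wcovBy (y : MCover α m) {i j : Fin m} (hij : i ≤ j) :
    y.1 i = ⊥ ∨ y.1 i ⩿ y.1 j := by
  obtain ⟨f, l₀, l₁, l₂, p₁, p₂, -, hp, hf⟩ := y
  rw [Fin.le_def] at hij
  simp only [hf]
  split_ifs <;> first | omega | simp [hp.wcovBy]

theorem monotone (y : MCover α m) : Monotone y.1 := fun i j hij => by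
  obtain h | h := y.eq_bot_or_wcovBy hij
  · exact h ▸ bot_le
  · exact h.le

theorem lt_of_le_of_apply_ne {x y : MCover α m} (h : x ≤ y) (i : Fin m) (hi : x.1 i ≠ y.1 i) :
    x < y :=
  h.lt_of_ne fun hxy => hi (congrFun (congrArg Subtype.val hxy) i)

/-- The element `(⊥^a, p^(b - a), q^(m - b))` of the `m`-cover poset, where `p ⋖ q`. The indices `a`
and `b` are unrestricted: for `b ≤ a` there is no entry `p`, and for `m ≤ b` no entry `q`. -/
def tuple (h : p ⋖ q) (a b : ℕ) : MCover α m :=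
  ⟨fun i => if (i : ℕ) < a then ⊥ else if (i : ℕ) < b then p else q,
    min a m, min b m - min a m, m - max (min a m) (min b m), p, q, by omega, h, fun i => by
      dsimp only
      split_ifs <;> first | omega | rfl⟩

theorem tuple_apply (h : p ⋖ q) (i : Fin m) :
    (tuple h a b).1 i = if (i : ℕ) < a then ⊥ else if (i : ℕ) < b then p else q := rfl

theorem tuple_apply_of_lt (h : p ⋖ q) {i : Fin m} (hi : (i : ℕ) < a) : (tuple h a b).1 i = ⊥ :=
  if_pos hi

theorem tuple_apply_of_le_of_lt (h : p ⋖ q) {i : Fin m} (hai : a ≤ i) (hib : (i : ℕ) < b) :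
    (tuple h a b).1 i = p :=
  (if_neg hai.not_gt).trans (if_pos hib)

theorem tuple_apply_of_le_of_le (h : p ⋖ q) {i : Fin m} (hai : a ≤ i) (hbi : b ≤ i) :
    (tuple h a b).1 i = q :=
  (if_neg hai.not_gt).trans (if_neg hbi.not_gt)

theorem tuple_le (h : p ⋖ q) {y : MCover α m} (hp : ∀ ha : a < m, p ≤ y.1 ⟨a, ha⟩)
    (hq : ∀ hb : b < m, q ≤ y.1 ⟨b, hb⟩) : tuple h a b ≤ y := fun i => by
  rw [tuple_apply]
  split_ifs with hia hib
  · exact bot_le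
  · exact (hp (by omega)).trans (y.monotone (not_lt.1 hia))
  · exact (hq (by omega)).trans (y.monotone (not_lt.1 hib))

theorem le_tuple (h : p ⋖ q) {y : MCover α m} (hbot : ∀ i : Fin m, i < a → y.1 i = ⊥)
    (hp : ∀ i : Fin m, i < b → y.1 i ≤ p) (hq : ∀ i, y.1 i ≤ q) : y ≤ tuple h a b := fun i => by
  rw [tuple_apply]
  split_ifs with hia hib
  · exact (hbot i hia).le
  · exact hp i hib
  · exact hq i

theorem tuple_le_tuple (h : p ⋖ q) {a' b' : ℕ} (ha : a' ≤ a) (hb : b' ≤ b) :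
    (tuple h a b : MCover α m) ≤ tuple h a' b' := fun i => by
  rw [tuple_apply, tuple_apply]
  split_ifs <;> first | omega | simp [h.le]

theorem tuple_apply_le (h : p ⋖ q) (i : Fin m) : (tuple h a b).1 i ≤ q := by
  rw [tuple_apply]
  split_ifs <;> simp [h.le]

theorem le_tuple_apply (h : p ⋖ q) {i : Fin m} (hi : a ≤ i) : p ≤ (tuple h a b).1 i := by
  rw [tuple_apply, if_neg hi.not_gt]
  split_ifs <;> simp [h.le]

/-- The element `x` of the `m`-cover poset is `(⊥^a, v^(m - a))`. A predicate rather than a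
construction because such an element is a `tuple` in several ways: with `v` as upper element of a
cover relation, or as lower element and no upper entries. -/
def IsStep (x : MCover α m) (a : ℕ) (v : α) : Prop :=
  ∀ i : Fin m, x.1 i = if (i : ℕ) < a then ⊥ else v

theorem isStep_tuple_self (h : p ⋖ q) : (tuple h a a : MCover α m).IsStep a q := fun i => by
  rw [tuple_apply]; split_ifs <;> rfl

theorem isStep_tuple_of_le (h : p ⋖ q) (hmb : m ≤ b) : (tuple h a b : MCover α m).IsStep a p :=
  fun i => by rw [tuple_apply, if_pos (i.2.trans_le hmb)]

namespace IsStep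

variable {x y : MCover α m}

theorem apply_of_lt (hx : x.IsStep a v) {i : Fin m} (hi : (i : ℕ) < a) : x.1 i = ⊥ :=
  (hx i).trans (if_pos hi)

theorem apply_of_le (hx : x.IsStep a v) {i : Fin m} (hi : a ≤ i) : x.1 i = v :=
  (hx i).trans (if_neg hi.not_gt)

theorem apply_le (hx : x.IsStep a v) (i : Fin m) : x.1 i ≤ v := by
  rw [hx]
  split_ifs <;> simp

theorem le (hx : x.IsStep a v) (hv : ∀ ha : a < m, v ≤ y.1 ⟨a, ha⟩) : x ≤ y := fun i => by
  rw [hx]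
  split_ifs with hia
  · exact bot_le
  · exact (hv (by omega)).trans (y.monotone (not_lt.1 hia))

theorem ge (hx : x.IsStep a v) (hbot : ∀ i : Fin m, i < a → y.1 i = ⊥) (hv : ∀ i, y.1 i ≤ v) :
    y ≤ x := fun i => by
  rw [hx]
  split_ifs with hia
  · exact (hbot i hia).le
  · exact hv i

theorem eq (hx : x.IsStep a v) (hy : y.IsStep a v) : x = y :=
  Subtype.ext (funext fun i => (hx i).trans (hy i).symm)

theorem of_forall_eq_bot (hx : ∀ i, x.1 i = ⊥) (v : α) : x.IsStep m v := fun i =>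
  (hx i).trans (if_pos i.2).symm

theorem apply_eq_bot_iff (hx : x.IsStep a v) (hv : v ≠ ⊥) (i : Fin m) : x.1 i = ⊥ ↔ i < a := by
  rw [hx, ite_eq_left_iff, imp_iff_not hv, not_not]

end IsStep

theorem exists_eq_tuple (y : MCover α m) :
    ∃ (p q : α) (h : p ⋖ q) (a b : ℕ), a ≤ b ∧ b ≤ m ∧ y = tuple h a b := by
  obtain ⟨f, l₀, l₁, l₂, p₁, p₂, hm, hp, hf⟩ := y
  exact ⟨p₁, p₂, hp, l₀, l₀ + l₁, by omega, by omega, Subtype.ext (funext hf)⟩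

theorem tuple_apply_eq_bot_iff (hp : p ≠ ⊥) (h : p ⋖ q) (i : Fin m) :
    (tuple h a b).1 i = ⊥ ↔ i < a := by
  have hq : q ≠ ⊥ := (bot_le.trans_lt h.lt).ne'
  rw [tuple_apply]
  split_ifs <;> simp_all

theorem tuple_apply_eq_left_iff (h : p ⋖ q) {i : Fin m} (hi : a ≤ i) :
    (tuple h a b).1 i = p ↔ i < b := by
  rw [tuple_apply, if_neg hi.not_gt, ite_eq_left_iff, imp_iff_not h.ne', not_not]

theorem eq_of_tuple_eq_tuple {p' q' : α} {a' b' : ℕ} (hp : p ≠ ⊥) (hp' : p' ≠ ⊥) (h : p ⋖ q)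
    (h' : p' ⋖ q') (hab : a < b) (hbm : b ≤ m) (hab' : a' < b') (hbm' : b' ≤ m)
    (heq : (tuple h a b : MCover α m) = tuple h' a' b') : p = p' ∧ a = a' ∧ b = b' := by
  have ha : a = a' := eq_of_forall_fin_lt_iff (hab.le.trans hbm) (hab'.le.trans hbm') fun i => by
    rw [← tuple_apply_eq_bot_iff hp h, heq, tuple_apply_eq_bot_iff hp' h']
  subst ha
  have hpp' : p = p' := by
    rw [← tuple_apply_of_le_of_lt h (i := ⟨a, hab.trans_le hbm⟩) le_rfl hab, heq]
    exact tuple_apply_of_le_of_lt h' le_rfl hab'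
  subst hpp'
  refine ⟨rfl, rfl, eq_of_forall_fin_lt_iff hbm hbm' fun i => ?_⟩
  obtain hia | hai := lt_or_ge (i : ℕ) a
  · exact iff_of_true (hia.trans hab) (hia.trans hab')
  · rw [← tuple_apply_eq_left_iff h hai, heq, tuple_apply_eq_left_iff h' hai]

theorem card_lowerCovers_step [IsStronglyCoatomic α] {x : MCover α m} (ha : a < m)
    (hx : x.IsStep a v) : Nat.card {y // y ⋖ x} = Nat.card {d // d ⋖ v} := by
  have hxa : x.1 ⟨a, ha⟩ = v := hx.apply_of_le le_rfl
  have htuple {d : α} (h : d ⋖ v) : (tuple h a (a + 1)).1 ⟨a, ha⟩ = d :=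
    tuple_apply_of_le_of_lt h le_rfl a.lt_succ_self
  refine card_lowerCovers_eq_card (fun d => tuple d.2 a (a + 1)) (fun d d' hdd' => ?_)
    (fun d => lt_of_le_of_apply_ne ?_ ⟨a, ha⟩ ?_) (fun y hyx => ?_)
  · have hle : d.1 ≤ d'.1 := (htuple d.2).ge.trans ((hdd' _).trans_eq (htuple d'.2))
    exact Subtype.ext (hle.eq_of_not_lt fun hlt => d.2.2 hlt d'.2.lt)
  · exact hx.ge (fun i hia => tuple_apply_of_lt d.2 hia) (tuple_apply_le d.2)
  · rw [htuple, hxa]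
    exact d.2.ne
  · have hyv (i) : y.1 i ≤ v := (hyx.le i).trans (hx.apply_le i)
    have hya : y.1 ⟨a, ha⟩ < v :=
      (hyv _).lt_of_ne fun hya => hyx.not_ge (hx.le fun _ => hya.ge)
    obtain ⟨d, hyd, hdv⟩ := exists_le_covBy_of_lt hya
    refine ⟨⟨d, hdv⟩, le_tuple _ (fun i hia => ?_) (fun i hia => ?_) hyv⟩
    · exact le_bot_iff.1 ((hyx.le i).trans_eq (hx.apply_of_lt hia))
    · exact (y.monotone (Nat.le_of_lt_succ hia)).trans hyd

theorem card_lowerCovers_tuple_of_lt (hp : p ≠ ⊥) (h : p ⋖ q) (hab : a < b) (hbm : b < m)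
    (hlow : ∀ z w, z ≠ ⊥ → z < p → z ⋖ w → w ≤ p) :
    Nat.card {y : MCover α m // y ⋖ tuple h a b} = 2 := by
  have ham : a < m := hab.trans hbm
  have hxa : (tuple h a b).1 ⟨a, ham⟩ = p := tuple_apply_of_le_of_lt h le_rfl hab
  have hxb : (tuple h a b).1 ⟨b, hbm⟩ = q := tuple_apply_of_le_of_le h hab.le le_rfl
  have hsa : (tuple h (a + 1) b).1 ⟨a, ham⟩ = ⊥ := tuple_apply_of_lt h a.lt_succ_self
  have hsb : (tuple h (a + 1) b).1 ⟨b, hbm⟩ = q := tuple_apply_of_le_of_le h hab le_rfl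
  have hta : (tuple h a (b + 1)).1 ⟨a, ham⟩ = p := tuple_apply_of_le_of_lt h le_rfl (by grind)
  have htb : (tuple h a (b + 1)).1 ⟨b, hbm⟩ = p := tuple_apply_of_le_of_lt h hab.le (by grind)
  refine card_lowerCovers_eq_two (s := tuple h (a + 1) b) (t := tuple h a (b + 1))
    (lt_of_le_of_apply_ne (tuple_le_tuple h a.le_succ le_rfl) ⟨a, ham⟩ ?_)
    (lt_of_le_of_apply_ne (tuple_le_tuple h le_rfl b.le_succ) ⟨b, hbm⟩ ?_)
    (fun hst => ?_) (fun hts => ?_) (fun y hyx => ?_)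
  · rw [hsa, hxa]
    exact hp.symm
  · rw [htb, hxb]
    exact h.ne
  · exact h.lt.not_ge (hsb.ge.trans ((hst _).trans_eq htb))
  · exact hp (le_bot_iff.1 (hta.ge.trans ((hts _).trans_eq hsa)))
  have hyq (i) : y.1 i ≤ q := (hyx.le i).trans (tuple_apply_le h i)
  have hyp (i : Fin m) (hib : i < b) : y.1 i ≤ p := (hyx.le i).trans (by
    rw [tuple_apply, if_pos hib]
    split_ifs <;> simp)
  by_cases hya : y.1 ⟨a, ham⟩ = ⊥
  · refine .inl (le_tuple h (fun i hia => ?_) hyp hyq)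
    exact le_bot_iff.1 ((y.monotone (Nat.le_of_lt_succ hia)).trans_eq hya)
  suffices hyb : y.1 ⟨b, hbm⟩ ≤ p by
    refine .inr (le_tuple h (fun i hia => ?_) (fun i hib => ?_) hyq)
    · exact le_bot_iff.1 ((hyx.le i).trans_eq (tuple_apply_of_lt h hia))
    · exact (y.monotone (Nat.le_of_lt_succ hib)).trans hyb
  have hcov : y.1 ⟨a, ham⟩ ⩿ y.1 ⟨b, hbm⟩ := (y.eq_bot_or_wcovBy hab.le).resolve_left hya
  obtain hyap | hyap := (hyp ⟨a, ham⟩ hab).lt_or_eq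
  · obtain hcov | heq := wcovBy_iff_covBy_or_eq.1 hcov
    · exact hlow _ _ hya hyap hcov
    · exact heq ▸ hyap.le
  · obtain hyb | hyb := h.eq_or_eq (hyap.ge.trans hcov.le) (hyq ⟨b, hbm⟩)
    · exact hyb.le
    · exact absurd (tuple_le h (fun _ => hyap.ge) fun _ => hyb.ge) hyx.not_ge

theorem card_upperCovers_step_zero [IsStronglyAtomic α] {x : MCover α (m + 1)}
    (hx : x.IsStep 0 v) : Nat.card {y // x ⋖ y} = Nat.card {q // v ⋖ q} := by
  have hxv (i) : x.1 i = v := hx.apply_of_le i.1.zero_le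
  have htuple {q : α} (h : v ⋖ q) : (tuple h 0 m).1 (Fin.last m) = q :=
    tuple_apply_of_le_of_le h m.zero_le le_rfl
  refine card_upperCovers_eq_card (fun q => tuple q.2 0 m) (fun q q' hqq' => ?_)
    (fun q => lt_of_le_of_apply_ne (hx.le fun _ => le_tuple_apply q.2 le_rfl) (Fin.last m) ?_)
    (fun y hxy => ?_)
  · have hle : q.1 ≤ q'.1 := (htuple q.2).ge.trans ((hqq' _).trans_eq (htuple q'.2))
    exact Subtype.ext (hle.eq_of_not_lt (q'.2.2 q.2.lt))
  · rw [htuple, hxv]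
    exact q.2.ne
  · have hvy (i) : v ≤ y.1 i := (hxv i).ge.trans (hxy.le i)
    have hlast : v < y.1 (Fin.last m) := (hvy _).lt_of_ne fun heq =>
      hxy.not_ge (hx.ge (by simp) fun i => (y.monotone i.le_last).trans_eq heq.symm)
    obtain ⟨q, hvq, hqy⟩ := exists_covBy_le_of_lt hlast
    exact ⟨⟨q, hvq⟩, tuple_le hvq (fun _ => hvy _) fun _ => hqy⟩

open Classical in
/-- The upper cover of `(⊥^(a + 1), v^(m - a - 1))` that replaces its last `⊥` by `d ⋖ v`, or by `v`
if `d = ⊥`. -/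
noncomputable def raiseBot {d : α} (h : d ⋖ v) (a : ℕ) : MCover α m :=
  tuple h a (if d = ⊥ then a else a + 1)

open Classical in
theorem raiseBot_apply_self {d : α} (h : d ⋖ v) (ha : a < m) :
    (raiseBot h a).1 ⟨a, ha⟩ = if d = ⊥ then v else d := by
  split_ifs with hd
  · exact tuple_apply_of_le_of_le h le_rfl (by rw [if_pos hd])
  · exact tuple_apply_of_le_of_lt h le_rfl (by rw [if_neg hd]; exact a.lt_succ_self)

theorem raiseBot_apply_of_gt {d : α} (h : d ⋖ v) {i : Fin m} (hi : a < (i : ℕ)) :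
    (raiseBot h a).1 i = v := by
  refine tuple_apply_of_le_of_le h hi.le ?_
  split_ifs <;> omega

theorem raiseBot_apply_self_ne_bot {d : α} (h : d ⋖ v) (ha : a < m) :
    (raiseBot h a).1 ⟨a, ha⟩ ≠ ⊥ := by
  rw [raiseBot_apply_self]
  split_ifs with hd
  · exact (bot_le.trans_lt h.lt).ne'
  · exact hd

theorem eq_of_raiseBot_le {d d' : α} (h : d ⋖ v) (h' : d' ⋖ v) (ha : a < m)
    (hle : (raiseBot h a : MCover α m) ≤ raiseBot h' a) : d = d' := by
  have hle := hle ⟨a, ha⟩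
  rw [raiseBot_apply_self, raiseBot_apply_self] at hle
  split_ifs at hle with hd hd' hd'
  · rw [hd, hd']
  · exact absurd hle h'.lt.not_ge
  · exact (h'.eq_or_eq (hd' ▸ bot_le) h.le).resolve_right h.ne
  · exact hle.eq_of_not_lt fun hlt => h.2 hlt h'.lt

theorem exists_raiseBot_le [IsStronglyCoatomic α] {y : MCover α m} (ha : a + 1 < m)
    (hya : y.1 ⟨a, by omega⟩ ≠ ⊥) (hv : y.1 ⟨a + 1, ha⟩ = v) :
    ∃ (d : α) (h : d ⋖ v), raiseBot h a ≤ y := by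
  have hcov : y.1 ⟨a, by omega⟩ ⩿ v :=
    hv ▸ (y.eq_bot_or_wcovBy (Fin.le_def.2 a.le_succ)).resolve_left hya
  obtain hcov | heq := wcovBy_iff_covBy_or_eq.1 hcov
  · refine ⟨_, hcov, ?_⟩
    rw [raiseBot, if_neg hya]
    exact tuple_le hcov (fun _ => le_rfl) fun _ => hv.ge
  · obtain ⟨d, -, hdv⟩ := exists_le_covBy_of_lt (bot_lt_iff_ne_bot.2 (heq ▸ hya))
    refine ⟨d, hdv, tuple_le hdv (fun _ => hdv.le.trans heq.ge) fun _ => ?_⟩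
    refine heq.ge.trans (y.monotone (Fin.le_def.2 ?_))
    dsimp only
    split_ifs <;> omega

theorem card_upperCovers_step_succ [Finite α] {x : MCover α (m + 1)} (ha : a < m)
    (hx : x.IsStep (a + 1) v) :
    Nat.card {y // x ⋖ y} = Nat.card {q // v ⋖ q} + Nat.card {d // d ⋖ v} := by
  have haM : a < m + 1 := by omega
  have hxlast : x.1 (Fin.last m) = v := hx.apply_of_le ha
  have htuple {q : α} (h : v ⋖ q) : (tuple h (a + 1) m).1 (Fin.last m) = q :=
    tuple_apply_of_le_of_le h ha le_rfl
  have hraise {d : α} (h : d ⋖ v) : (raiseBot h a).1 (Fin.last m) = v := raiseBot_apply_of_gt h ha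
  rw [← Nat.card_sum]
  refine card_upperCovers_eq_card
    (Sum.elim (fun q => tuple q.2 (a + 1) m) (fun d => raiseBot d.2 a)) ?_ ?_ fun y hxy => ?_
  · rintro (q | d) (q' | d') hle
    · have hle : q.1 ≤ q'.1 := (htuple q.2).ge.trans ((hle _).trans_eq (htuple q'.2))
      exact congrArg _ (Subtype.ext (hle.eq_of_not_lt (q'.2.2 q.2.lt)))
    · exact absurd ((htuple q.2).ge.trans ((hle _).trans_eq (hraise d'.2))) q.2.lt.not_ge
    · have hbot := (hle ⟨a, haM⟩).trans_eq (tuple_apply_of_lt q'.2 a.lt_succ_self)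
      exact absurd (le_bot_iff.1 hbot) (raiseBot_apply_self_ne_bot d.2 haM)
    · exact congrArg _ (Subtype.ext (eq_of_raiseBot_le d.2 d'.2 haM hle))
  · rintro (q | d)
    · refine lt_of_le_of_apply_ne (hx.le fun _ => le_tuple_apply q.2 le_rfl) (Fin.last m) ?_
      exact hxlast.trans_ne (q.2.ne.trans_eq (htuple q.2).symm)
    · refine lt_of_le_of_apply_ne (hx.le fun _ => (raiseBot_apply_of_gt d.2 a.lt_succ_self).ge)
        ⟨a, haM⟩ ?_
      exact (hx.apply_of_lt a.lt_succ_self).trans_ne (raiseBot_apply_self_ne_bot d.2 haM).symm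
  · have hvy (i : Fin (m + 1)) (hai : a + 1 ≤ i) : v ≤ y.1 i :=
      (hx.apply_of_le hai).ge.trans (hxy.le i)
    obtain hlt | heq := (hvy (Fin.last m) ha).lt_or_eq
    · obtain ⟨q, hvq, hqy⟩ := exists_covBy_le_of_lt hlt
      exact ⟨.inl ⟨q, hvq⟩, tuple_le hvq (fun _ => hvy _ le_rfl) fun _ => hqy⟩
    · have hyv (i : Fin (m + 1)) : y.1 i ≤ v := (y.monotone i.le_last).trans_eq heq.symm
      have hya : y.1 ⟨a, haM⟩ ≠ ⊥ := fun hya => hxy.not_ge <| hx.ge (fun i hia =>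
        le_bot_iff.1 ((y.monotone (Nat.le_of_lt_succ hia)).trans_eq hya)) hyv
      obtain ⟨d, hdv, hdy⟩ := exists_raiseBot_le (by omega) hya ((hyv _).antisymm (hvy _ le_rfl))
      exact ⟨.inr ⟨d, hdv⟩, hdy⟩

theorem tuple_le_of_apply_ne (h : p ⋖ q) {y : MCover α m} (hab : a ≤ b) (hb : b < m)
    (hup : ∀ z, p < z → q ≤ z) (hxy : tuple h a (b + 1) ≤ y) (hyb : y.1 ⟨b, hb⟩ ≠ p) :
    tuple h a b ≤ y := by
  have hpy {i : Fin m} (hai : a ≤ i) : p ≤ y.1 i := (le_tuple_apply h hai).trans (hxy i)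
  exact tuple_le h (fun _ => hpy le_rfl) fun _ => hup _ ((hpy hab).lt_of_ne hyb.symm)

theorem le_tuple_of_apply_eq (h : p ⋖ q) {y : MCover α m} (hp : p ≠ ⊥) (hb : b + 1 < m)
    (hab : a ≤ b) (hxy : tuple h a (b + 1) ≤ y) (hyb : y.1 ⟨b, by omega⟩ = p)
    (hbot : ∀ i : Fin m, i < a → y.1 i = ⊥) : y ≤ tuple h a (b + 1) := by
  have hyp (i : Fin m) (hib : i < b + 1) : y.1 i ≤ p :=
    (y.monotone (Nat.le_of_lt_succ hib)).trans_eq hyb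
  refine le_tuple h hbot hyp fun i => ?_
  obtain hib | hbi := lt_or_ge (i : ℕ) (b + 1)
  · exact (hyp i hib).trans h.le
  have hqy : q ≤ y.1 i :=
    (tuple_apply_of_le_of_le h (hab.trans (b.le_succ.trans hbi)) hbi).ge.trans (hxy i)
  have hcov : y.1 ⟨b, by omega⟩ ⩿ y.1 i :=
    (y.eq_bot_or_wcovBy (Fin.le_def.2 (b.le_succ.trans hbi))).resolve_left (hyb.trans_ne hp)
  exact (hqy.eq_of_not_lt (hcov.2 (hyb.trans_lt h.lt))).ge

theorem card_upperCovers_tuple_zero (hp : p ≠ ⊥) (h : p ⋖ q) (hb : b + 1 < m)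
    (hup : ∀ z, p < z → q ≤ z) : Nat.card {y : MCover α m // tuple h 0 (b + 1) ⋖ y} = 1 := by
  have hbm : b < m := b.lt_succ_self.trans hb
  have hxb : (tuple h 0 (b + 1)).1 ⟨b, hbm⟩ = p :=
    tuple_apply_of_le_of_lt h b.zero_le b.lt_succ_self
  have hsb : (tuple h 0 b).1 ⟨b, hbm⟩ = q := tuple_apply_of_le_of_le h b.zero_le le_rfl
  refine card_upperCovers_eq_one (s := tuple h 0 b)
    (lt_of_le_of_apply_ne (tuple_le_tuple h le_rfl b.le_succ) ⟨b, hbm⟩ ?_) fun y hxy => ?_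
  · exact hxb.trans_ne (h.ne.trans_eq hsb.symm)
  · refine tuple_le_of_apply_ne h b.zero_le hbm hup hxy.le fun hyb => hxy.not_ge ?_
    exact le_tuple_of_apply_eq h hp hb b.zero_le hxy.le hyb (by simp)

theorem card_upperCovers_tuple_succ (hp : p ≠ ⊥) (h : p ⋖ q) (hab : a < b) (hb : b + 1 < m)
    (hup : ∀ z, p < z → q ≤ z) :
    Nat.card {y : MCover α m // tuple h (a + 1) (b + 1) ⋖ y} = 2 := by
  have hbm : b < m := b.lt_succ_self.trans hb
  have ham : a < m := hab.trans hbm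
  have hxa : (tuple h (a + 1) (b + 1)).1 ⟨a, ham⟩ = ⊥ := tuple_apply_of_lt h a.lt_succ_self
  have hxb : (tuple h (a + 1) (b + 1)).1 ⟨b, hbm⟩ = p :=
    tuple_apply_of_le_of_lt h hab b.lt_succ_self
  have hsa : (tuple h (a + 1) b).1 ⟨a, ham⟩ = ⊥ := tuple_apply_of_lt h a.lt_succ_self
  have hsb : (tuple h (a + 1) b).1 ⟨b, hbm⟩ = q := tuple_apply_of_le_of_le h hab le_rfl
  have hta : (tuple h a (b + 1)).1 ⟨a, ham⟩ = p :=
    tuple_apply_of_le_of_lt h le_rfl (hab.trans b.lt_succ_self)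
  have htb : (tuple h a (b + 1)).1 ⟨b, hbm⟩ = p :=
    tuple_apply_of_le_of_lt h hab.le b.lt_succ_self
  refine card_upperCovers_eq_two (s := tuple h (a + 1) b) (t := tuple h a (b + 1))
    (lt_of_le_of_apply_ne (tuple_le_tuple h le_rfl b.le_succ) ⟨b, hbm⟩ ?_)
    (lt_of_le_of_apply_ne (tuple_le_tuple h a.le_succ le_rfl) ⟨a, ham⟩ ?_)
    (fun hst => ?_) (fun hts => ?_) (fun y hxy => ?_)
  · exact hxb.trans_ne (h.ne.trans_eq hsb.symm)
  · exact hxa.trans_ne (hp.symm.trans_eq hta.symm)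
  · exact h.lt.not_ge (hsb.ge.trans ((hst _).trans_eq htb))
  · exact hp (le_bot_iff.1 (hta.ge.trans ((hts _).trans_eq hsa)))
  by_cases hyb : y.1 ⟨b, hbm⟩ = p
  · have hya : y.1 ⟨a, ham⟩ ≠ ⊥ := fun hya => hxy.not_ge <|
      le_tuple_of_apply_eq h hp hb hab hxy.le hyb fun i hia =>
        le_bot_iff.1 ((y.monotone (Nat.le_of_lt_succ hia)).trans_eq hya)
    have hxq : (tuple h (a + 1) (b + 1)).1 ⟨b + 1, hb⟩ = q :=
      tuple_apply_of_le_of_le h (hab.trans b.lt_succ_self) le_rfl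
    have hqy : q ≤ y.1 ⟨b + 1, hb⟩ := hxq.ge.trans (hxy.le _)
    have hcov : y.1 ⟨a, ham⟩ ⩿ y.1 ⟨b + 1, hb⟩ :=
      (y.eq_bot_or_wcovBy (Fin.le_def.2 (hab.le.trans b.le_succ))).resolve_left hya
    have hyap : y.1 ⟨a, ham⟩ ≤ p := (y.monotone (Fin.le_def.2 hab.le)).trans_eq hyb
    have hpy : p ≤ y.1 ⟨a, ham⟩ :=
      (hyap.eq_of_not_lt fun hlt => hcov.2 hlt (h.lt.trans_le hqy)).ge
    exact .inr (tuple_le h (fun _ => hpy) fun _ => hqy)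
  · exact .inl (tuple_le_of_apply_ne h hab hbm hup hxy.le hyb)

end OrderBot

section BoundedOrder

variable {α : Type*} [PartialOrder α] [BoundedOrder α] [Finite α] {m : ℕ} {p q : α} {a b : ℕ}

theorem card_upperCovers_tuple (hα : IsChainSum α) (hp : p ≠ ⊥) (h : p ⋖ q) (hab : a ≤ b)
    (hb : b < m) :
    Nat.card {y : MCover α m // tuple h a (b + 1) ⋖ y} = if a = 0 then 1 else 2 := by
  have hup (z : α) : p < z → q ≤ z := hα.covBy_le_of_lt hp h
  have hp' : p ≠ ⊤ := (h.lt.trans_le le_top).ne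
  obtain hbm | hbm : b + 1 < m ∨ m = b + 1 := by omega
  · cases a with
    | zero => exact card_upperCovers_tuple_zero hp h hbm hup
    | succ a => exact card_upperCovers_tuple_succ hp h hab hbm hup
  · subst hbm
    have hstep : (tuple h a (b + 1) : MCover α (b + 1)).IsStep a p := isStep_tuple_of_le h le_rfl
    cases a with
    | zero => rw [card_upperCovers_step_zero hstep, hα.card_upperCovers hp hp', if_pos rfl]
    | succ a =>
      rw [card_upperCovers_step_succ hab hstep, hα.card_upperCovers hp hp',
        hα.card_lowerCovers hp hp', if_neg a.succ_ne_zero]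

theorem card_lowerCovers_tuple (hα : IsChainSum α) (hp : p ≠ ⊥) (h : p ⋖ q) (hab : a ≤ b)
    (hb : b < m) :
    Nat.card {y : MCover α m // y ⋖ tuple h a (b + 1)} = if b + 1 = m then 1 else 2 := by
  split_ifs with hbm
  · rw [card_lowerCovers_step (hab.trans_lt hb) (isStep_tuple_of_le h hbm.ge),
      hα.card_lowerCovers hp (h.lt.trans_le le_top).ne]
  · exact card_lowerCovers_tuple_of_lt hp h (Nat.lt_succ_of_le hab) (by omega)
      fun z w hz hzp hzw => hα.covBy_le_of_lt hz hzw hzp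

end BoundedOrder

section TopStep

variable {α : Type*} [PartialOrder α] [BoundedOrder α] [Finite α] [Nontrivial α] {m a : ℕ}

/-- The element `(⊥^a, ⊤^(m - a))` of the `m`-cover poset. -/
noncomputable def topStep (a : ℕ) : MCover α m :=
  tuple (exists_le_covBy_of_lt (bot_lt_top (α := α))).choose_spec.2 a a

theorem isStep_topStep (a : ℕ) : (topStep a : MCover α m).IsStep a ⊤ :=
  isStep_tuple_self _

theorem topStep_self_apply (i : Fin m) : (topStep m : MCover α m).1 i = ⊥ :=
  (isStep_topStep m).apply_of_lt i.2

theorem card_upperCovers_topStep (hα : IsChainSum α) (ha : a ≤ m) :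
    Nat.card {y // (topStep a : MCover α m) ⋖ y} =
      if a = 0 then 0 else Nat.card {x : α // ⊥ ⋖ x} := by
  have hx := isStep_topStep (α := α) (m := m) a
  cases a with
  | zero => exact card_upperCovers_of_isMax fun y _ => hx.ge (by simp) fun _ => le_top
  | succ a =>
    obtain ⟨m, rfl⟩ := Nat.exists_eq_succ_of_ne_zero (a.succ_pos.trans_le ha).ne'
    rw [if_neg a.succ_ne_zero]
    obtain ham | rfl := (Nat.le_of_succ_le_succ ha).lt_or_eq
    · rw [card_upperCovers_step_succ ham hx, card_upperCovers_of_isMax isMax_top, zero_add,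
        hα.card_coatoms_eq_card_atoms]
    · exact card_upperCovers_step_zero topStep_self_apply

theorem card_lowerCovers_topStep (hα : IsChainSum α) (ha : a ≤ m) :
    Nat.card {y // y ⋖ (topStep a : MCover α m)} =
      if a = m then 0 else Nat.card {x : α // ⊥ ⋖ x} := by
  split_ifs with ham
  · subst ham
    exact card_lowerCovers_of_isMin fun y _ i => (topStep_self_apply i).trans_le bot_le
  · rw [card_lowerCovers_step (by omega) (isStep_topStep a), hα.card_coatoms_eq_card_atoms]

end TopStep

section OfSteps

variable {α : Type*} [PartialOrder α] [BoundedOrder α] [Finite α] {m : ℕ}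

/-- An upper cover of an element of the proper part. -/
noncomputable def upperCover (p : Set.Ioo (⊥ : α) ⊤) : α :=
  (exists_covBy_le_of_lt p.2.2).choose

theorem covBy_upperCover (p : Set.Ioo (⊥ : α) ⊤) : p.1 ⋖ upperCover p :=
  (exists_covBy_le_of_lt p.2.2).choose_spec.1

/-- The parametrization of the `m`-cover poset by the triples `(p, b, a)` with `p` proper and
`a ≤ b < m`, standing for `tuple _ a (b + 1)` (so that at least one entry is `p`), and by the
`a ≤ m`, standing for `topStep a`. -/
noncomputable def ofSteps [Nontrivial α] :
    Set.Ioo (⊥ : α) ⊤ × (Σ b : Fin m, Fin (b + 1)) ⊕ Fin (m + 1) → MCover α m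
  | .inl (p, ⟨b, a⟩) => tuple (covBy_upperCover p) a (b + 1)
  | .inr a => topStep a

theorem ofSteps_injective [Nontrivial α] : Function.Injective (ofSteps (α := α) (m := m)) := by
  have hne (p : Set.Ioo (⊥ : α) ⊤) (b : Fin m) (a : Fin (b + 1)) (a' : Fin (m + 1)) :
      ofSteps (.inl (p, ⟨b, a⟩)) ≠ (ofSteps (.inr a') : MCover α m) := fun heq => by
    have hp : (topStep a').1 b = p.1 := by
      rw [← tuple_apply_of_le_of_lt (covBy_upperCover p) (Nat.le_of_lt_succ a.2) b.1.lt_succ_self]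
      exact congrFun (congrArg Subtype.val heq.symm) b
    rw [isStep_topStep] at hp
    split_ifs at hp
    · exact p.2.1.ne hp
    · exact p.2.2.ne' hp
  rintro (⟨p, b, a⟩ | a) (⟨p', b', a'⟩ | a') heq
  · obtain ⟨hp, ha, hb⟩ := eq_of_tuple_eq_tuple p.2.1.ne' p'.2.1.ne' (covBy_upperCover p)
      (covBy_upperCover p') a.2 b.2 a'.2 b'.2 heq
    obtain rfl := Subtype.ext hp
    obtain rfl : b = b' := Fin.ext (Nat.succ_injective hb)
    obtain rfl := Fin.ext ha
    rfl
  · exact absurd heq (hne _ _ _ _)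
  · exact absurd heq.symm (hne _ _ _ _)
  · refine congrArg _ (Fin.ext (eq_of_forall_fin_lt_iff (Nat.le_of_lt_succ a.2)
      (Nat.le_of_lt_succ a'.2) fun i => ?_))
    rw [← (isStep_topStep (α := α) _).apply_eq_bot_iff top_ne_bot,
      ← (isStep_topStep (α := α) _).apply_eq_bot_iff top_ne_bot]
    exact iff_of_eq (congrArg (fun x : MCover α m => x.1 i = ⊥) heq)

theorem IsStep.mem_range_ofSteps [Nontrivial α] {x : MCover α m} {a : ℕ} {v : α} (ha : a ≤ m)
    (hx : x.IsStep a v) : x ∈ Set.range ofSteps := by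
  have hbot (h : ∀ i, x.1 i = ⊥) : x ∈ Set.range ofSteps :=
    ⟨.inr (Fin.last m), (isStep_topStep m).eq (.of_forall_eq_bot h ⊤)⟩
  obtain rfl | ham := ha.eq_or_lt
  · exact hbot fun i => hx.apply_of_lt i.2
  obtain rfl | hv := eq_bot_or_bot_lt v
  · exact hbot fun i => le_bot_iff.1 (hx.apply_le i)
  obtain rfl | hv' := eq_top_or_lt_top v
  · exact ⟨.inr ⟨a, Nat.lt_succ_of_le ha⟩, (isStep_topStep a).eq hx⟩
  · obtain ⟨m, rfl⟩ := Nat.exists_eq_succ_of_ne_zero (ham.trans_le' a.zero_le).ne'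
    exact ⟨.inl (⟨v, hv, hv'⟩, ⟨Fin.last m, ⟨a, ham⟩⟩),
      (isStep_tuple_of_le (covBy_upperCover ⟨v, hv, hv'⟩) le_rfl).eq hx⟩

theorem ofSteps_surjective [Nontrivial α] (hα : IsChainSum α) :
    Function.Surjective (ofSteps (α := α) (m := m)) := fun y => by
  obtain ⟨p, q, h, a, b, hab, hbm, rfl⟩ := y.exists_eq_tuple
  obtain rfl | hab := hab.eq_or_lt
  · exact (isStep_tuple_self h).mem_range_ofSteps hbm
  obtain rfl | hp := eq_bot_or_bot_lt p
  · exact IsStep.mem_range_ofSteps hbm (v := q) fun i => by grind [tuple_apply]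
  obtain ⟨b, rfl⟩ := Nat.exists_eq_succ_of_ne_zero (hab.trans_le' a.zero_le).ne'
  obtain ⟨p, rfl⟩ : ∃ p' : Set.Ioo (⊥ : α) ⊤, p'.1 = p := ⟨⟨p, hp, h.lt.trans_le le_top⟩, rfl⟩
  obtain rfl : upperCover p = q := hα.upperCover_unique hp.ne' (covBy_upperCover p) h
  exact ⟨.inl (p, ⟨⟨b, hbm⟩, ⟨a, hab⟩⟩), rfl⟩

end OfSteps

end MCover

section Counting

open Polynomial

theorem card_fiber_eq_coeff_sum {D E : Type*} [Fintype D] {g : D → E} (hg : Function.Bijective g)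
    (f : E → ℕ) (j : ℕ) : Nat.card {x // f x = j} = (∑ d, X ^ f (g d) : ℕ[X]).coeff j := by
  classical
  rw [← Nat.card_congr ((Equiv.ofBijective g hg).subtypeEquiv fun _ => Iff.rfl)]
  simp [finsetSum_coeff, coeff_X_pow, Nat.card_eq_fintype_card, Fintype.card_subtype, eq_comm]

theorem sum_pairs_ite_first (m : ℕ) :
    ∑ b : Fin m, ∑ a : Fin (b + 1), (X : ℕ[X]) ^ (if (a : ℕ) = 0 then 1 else 2) =
      C m * X + C (m.choose 2) * X ^ 2 := by
  have hinner (b : ℕ) : ∑ a : Fin (b + 1), (X : ℕ[X]) ^ (if (a : ℕ) = 0 then 1 else 2) =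
      X + C b * X ^ 2 := by
    simp [Fin.sum_univ_succ]
  simp only [hinner, Finset.sum_add_distrib, ← Finset.sum_mul, ← map_sum,
    Fin.sum_univ_eq_sum_range fun b => b, Finset.sum_range_id, Nat.choose_two_right]
  simp

theorem sum_pairs_ite_last (m : ℕ) :
    ∑ b : Fin m, ∑ _a : Fin (b + 1), (X : ℕ[X]) ^ (if (b : ℕ) + 1 = m then 1 else 2) =
      C m * X + C (m.choose 2) * X ^ 2 := by
  obtain _ | m := m
  · simp
  have hsum : ∑ b : Fin m, ((b : ℕ) + 1) = (m + 1).choose 2 := by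
    rw [Fin.sum_univ_eq_sum_range (fun b => b + 1), Nat.choose_two_right, ← Finset.sum_range_id,
      Finset.sum_range_succ' (fun b => b) m, add_zero]
  have hne (b : Fin m) : (b : ℕ) ≠ m := b.2.ne
  simp [Fin.sum_univ_castSucc, hne, ← hsum, Finset.sum_mul, add_comm]

theorem sum_ite_first (m c : ℕ) :
    ∑ a : Fin (m + 1), (X : ℕ[X]) ^ (if (a : ℕ) = 0 then 0 else c) = 1 + C m * X ^ c := by
  simp [Fin.sum_univ_succ]

theorem sum_ite_last (m c : ℕ) :
    ∑ a : Fin (m + 1), (X : ℕ[X]) ^ (if (a : ℕ) = m then 0 else c) = 1 + C m * X ^ c := by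
  have hne (a : Fin m) : (a : ℕ) ≠ m := a.2.ne
  simp [Fin.sum_univ_castSucc, hne, add_comm]

variable {α : Type*} [PartialOrder α] [BoundedOrder α] [Finite α] [Nontrivial α] {m c : ℕ}

theorem MCover.card_fiber_eq_coeff (hα : IsChainSum α) (f : MCover α m → ℕ) {s : ℕ → ℕ → ℕ}
    {t : ℕ → ℕ}
    (hfs : ∀ (p : Set.Ioo (⊥ : α) ⊤) (b : Fin m) (a : Fin (b + 1)),
      f (tuple (covBy_upperCover p) a (b + 1)) = s b a)
    (hft : ∀ a : Fin (m + 1), f (topStep a) = t a)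
    (hs : ∑ b : Fin m, ∑ a : Fin (b + 1), (X : ℕ[X]) ^ s b a = C m * X + C (m.choose 2) * X ^ 2)
    (ht : ∑ a : Fin (m + 1), (X : ℕ[X]) ^ t a = 1 + C m * X ^ c) (j : ℕ) :
    Nat.card {x // f x = j} = (C 1 + C (Nat.card (Set.Ioo (⊥ : α) ⊤) * m) * X +
      C (Nat.card (Set.Ioo (⊥ : α) ⊤) * m.choose 2) * X ^ 2 + C m * X ^ c : ℕ[X]).coeff j := by
  have := Fintype.ofFinite (Set.Ioo (⊥ : α) ⊤)
  rw [card_fiber_eq_coeff_sum ⟨ofSteps_injective, ofSteps_surjective hα⟩ f]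
  congr 1
  simp only [Fintype.sum_sum_type, Fintype.sum_prod_type, Fintype.sum_sigma, ofSteps, hfs, hft, hs,
    ht, Finset.sum_const, Finset.card_univ, Nat.card_eq_fintype_card, nsmul_eq_mul, map_mul,
    map_one, ← C_eq_natCast, Nat.cast_id]
  ring

end Counting

section WithBotWithTop

variable {β γ : Type*} [PartialOrder β] [PartialOrder γ]

theorem IsChainSum.withBot_withTop (hup : ∀ ⦃x y z : β⦄, x ⋖ y → x ⋖ z → y = z)
    (hlow : ∀ ⦃x y z : β⦄, y ⋖ x → z ⋖ x → y = z) : IsChainSum (WithBot (WithTop β)) where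
  upperCover_unique x y z hx hy hz := by
    lift x to WithTop β using hx
    lift y to WithTop β using (bot_le.trans_lt hy.lt).ne'
    lift z to WithTop β using (bot_le.trans_lt hz.lt).ne'
    rw [WithBot.coe_covBy_coe] at hy hz
    lift x to β using (hy.lt.trans_le le_top).ne
    cases y <;> cases z <;> simp only [WithTop.coe_covBy_top, WithTop.coe_covBy_coe] at hy hz
    · rfl
    · exact absurd hz.lt hy.not_lt
    · exact absurd hy.lt hz.not_lt
    · rw [hup hy hz]
  lowerCover_unique x y z hx hy hz := by
    lift x to WithTop β using (bot_le.trans_lt hy.lt).ne'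
    lift x to β using fun h => hx (congrArg _ h)
    have lt_top {w : WithTop β} (hw : (w : WithBot (WithTop β)) ⋖ (x : WithTop β)) : w < ⊤ :=
      (WithBot.coe_lt_coe.1 hw.lt).trans_le le_top
    cases y <;> cases z
    · rfl
    · exact absurd (WithBot.coe_lt_coe.1 hz.lt) (WithBot.bot_covBy_coe.1 hy).not_lt
    · exact absurd (WithBot.coe_lt_coe.1 hy.lt) (WithBot.bot_covBy_coe.1 hz).not_lt
    · rename_i y z
      lift y to β using (lt_top hy).ne
      lift z to β using (lt_top hz).ne
      rw [WithBot.coe_covBy_coe, WithTop.coe_covBy_coe] at hy hz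
      rw [hlow hy hz]

theorem card_Ioo_withBot_withTop :
    Nat.card (Set.Ioo (⊥ : WithBot (WithTop β)) ⊤) = Nat.card β := by
  refine (Nat.card_congr (Equiv.ofBijective (fun x : β =>
    ⟨((x : WithTop β) : WithBot (WithTop β)), WithBot.bot_lt_coe _,
      WithBot.coe_lt_coe.2 (WithTop.coe_lt_top x)⟩) ⟨fun x y hxy => ?_, ?_⟩)).symm
  · exact WithTop.coe_injective (WithBot.coe_injective (congrArg Subtype.val hxy))
  · rintro ⟨x, hx, hx'⟩
    lift x to WithTop β using hx.ne'
    lift x to β using fun h => hx'.ne (congrArg _ h)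
    exact ⟨x, rfl⟩

theorem bot_covBy_coe_coe {x : β} : (⊥ : WithBot (WithTop β)) ⋖ (x : WithTop β) ↔ IsMin x := by
  rw [WithBot.bot_covBy_coe, isMin_iff_forall_not_lt, isMin_iff_forall_not_lt, WithTop.forall]
  simp

theorem card_atoms_withBot_withTop [Nonempty β] :
    Nat.card {x : WithBot (WithTop β) // ⊥ ⋖ x} = Nat.card {x : β // IsMin x} := by
  refine (Nat.card_congr (Equiv.ofBijective (fun x : {x : β // IsMin x} =>
    ⟨((x.1 : WithTop β) : WithBot (WithTop β)), bot_covBy_coe_coe.2 x.2⟩)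
      ⟨fun x y hxy => ?_, ?_⟩)).symm
  · exact Subtype.ext (WithTop.coe_injective (WithBot.coe_injective (congrArg Subtype.val hxy)))
  · rintro ⟨x, hx⟩
    lift x to WithTop β using hx.lt.ne'
    lift x to β using by
      rintro rfl
      obtain ⟨y⟩ := ‹Nonempty β›
      exact hx.2 (WithBot.bot_lt_coe (y : WithTop β)) (WithBot.coe_lt_coe.2 (WithTop.coe_lt_top y))
    exact ⟨⟨x, bot_covBy_coe_coe.1 hx⟩, rfl⟩

theorem isMin_inl {x : β} : IsMin (Sum.inl x : β ⊕ γ) ↔ IsMin x := by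
  simp [isMin_iff_forall_not_lt]

theorem isMin_inr {x : γ} : IsMin (Sum.inr x : β ⊕ γ) ↔ IsMin x := by
  simp [isMin_iff_forall_not_lt]

end WithBotWithTop

section PKL

variable {k l : ℕ}

instance : Finite (Anti l) := inferInstanceAs (Finite (Fin l))

theorem card_anti : Nat.card (Anti l) = l := Nat.card_fin l

theorem isMin_anti (x : Anti l) : IsMin x := fun y (h : y = x) => h.ge

theorem exists_inl_covBy_of_covBy {x y : Fin k ⊕ Anti l} (h : x ⋖ y) :
    ∃ i j : Fin k, i ⋖ j ∧ x = .inl i ∧ y = .inl j := by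
  obtain i | i := x <;> obtain j | j := y
  · exact ⟨i, j, by simpa [CovBy] using h, rfl, rfl⟩
  · exact absurd h.lt Sum.not_inl_lt_inr
  · exact absurd h.lt Sum.not_inr_lt_inl
  · exact absurd (Sum.inr_lt_inr_iff.1 h.lt) (isMin_anti j).not_lt

theorem isChainSum_PKL : IsChainSum (PKL k l) := by
  refine .withBot_withTop (fun x y z hy hz => ?_) (fun x y z hy hz => ?_)
  · obtain ⟨i, j, hij, rfl, rfl⟩ := exists_inl_covBy_of_covBy hy
    obtain ⟨i', j', hij', hi, rfl⟩ := exists_inl_covBy_of_covBy hz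
    obtain rfl := Sum.inl_injective hi
    rw [hij.unique_right hij']
  · obtain ⟨i, j, hij, rfl, rfl⟩ := exists_inl_covBy_of_covBy hy
    obtain ⟨i', j', hij', rfl, hj⟩ := exists_inl_covBy_of_covBy hz
    obtain rfl := Sum.inl_injective hj
    rw [hij.unique_left hij']

theorem card_Ioo_PKL : Nat.card (Set.Ioo (⊥ : PKL k l) ⊤) = k + l := by
  rw [card_Ioo_withBot_withTop, Nat.card_sum, Nat.card_fin, card_anti]

theorem card_atoms_PKL (hk : 0 < k) : Nat.card {x : PKL k l // ⊥ ⋖ x} = l + 1 := by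
  obtain ⟨k, rfl⟩ := Nat.exists_eq_succ_of_ne_zero hk.ne'
  have hfin : Nat.card {i : Fin (k + 1) // IsMin i} = 1 := by simp
  have hanti : Nat.card {x : Anti l // IsMin x} = l := by
    rw [Nat.card_congr (Equiv.subtypeUnivEquiv isMin_anti), card_anti]
  rw [card_atoms_withBot_withTop, Nat.card_congr Equiv.subtypeSum, Nat.card_sum]
  simp only [isMin_inl, isMin_inr, hfin, hanti, add_comm]

end PKL

open Polynomial in
theorem stmt_11_general {α : Type*} [PartialOrder α] [BoundedOrder α] [Finite α] [Nontrivial α]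
    (hα : IsChainSum α) (m j : ℕ) :
    Nat.card {x : MCover α m // Nat.card {y : MCover α m // x ⋖ y} = j} =
      (C 1 + C (Nat.card (Set.Ioo (⊥ : α) ⊤) * m) * X +
        C (Nat.card (Set.Ioo (⊥ : α) ⊤) * m.choose 2) * X ^ 2 +
        C m * X ^ Nat.card {x : α // ⊥ ⋖ x} : Polynomial ℕ).coeff j ∧
    Nat.card {x : MCover α m // Nat.card {y : MCover α m // y ⋖ x} = j} =
      (C 1 + C (Nat.card (Set.Ioo (⊥ : α) ⊤) * m) * X +
        C (Nat.card (Set.Ioo (⊥ : α) ⊤) * m.choose 2) * X ^ 2 +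
        C m * X ^ Nat.card {x : α // ⊥ ⋖ x} : Polynomial ℕ).coeff j := by
  constructor
  · refine MCover.card_fiber_eq_coeff hα _ (s := fun _ a => if a = 0 then 1 else 2)
      (t := fun a => if a = 0 then 0 else _) (fun p b a => ?_) (fun a => ?_)
      (sum_pairs_ite_first m) (sum_ite_first m _) j
    · exact MCover.card_upperCovers_tuple hα p.2.1.ne' _ (Nat.le_of_lt_succ a.2) b.2
    · exact MCover.card_upperCovers_topStep hα (Nat.le_of_lt_succ a.2)
  · refine MCover.card_fiber_eq_coeff hα _ (s := fun b _ => if b + 1 = m then 1 else 2)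
      (t := fun a => if a = m then 0 else _) (fun p b a => ?_) (fun a => ?_)
      (sum_pairs_ite_last m) (sum_ite_last m _) j
    · exact MCover.card_lowerCovers_tuple hα p.2.1.ne' _ (Nat.le_of_lt_succ a.2) b.2
    · exact MCover.card_lowerCovers_topStep hα (Nat.le_of_lt_succ a.2)

open Polynomial in
/-- In `P_{k,l}^⟨m⟩`, the number of elements with exactly `j` upper covers and the number
of elements with exactly `j` lower covers both equal the coefficient of `t^j` in the
polynomial `1 + (k+l)m·t + (k+l)·C(m,2)·t² + m·t^{l+1}`. -/
theorem stmt_11 (k l m : ℕ) (hk : 0 < k) (hl : 0 < l) (hm : 0 < m) (j : ℕ) :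
    Nat.card {x : MCover (PKL k l) m // Nat.card {y : MCover (PKL k l) m // x ⋖ y} = j} =
      (C 1 + C ((k + l) * m) * X + C ((k + l) * m.choose 2) * X ^ 2 +
        C m * X ^ (l + 1) : Polynomial ℕ).coeff j ∧
    Nat.card {x : MCover (PKL k l) m // Nat.card {y : MCover (PKL k l) m // y ⋖ x} = j} =
      (C 1 + C ((k + l) * m) * X + C ((k + l) * m.choose 2) * X ^ 2 +
        C m * X ^ (l + 1) : Polynomial ℕ).coeff j := by
  simpa only [card_Ioo_PKL, card_atoms_PKL hk] using
    stmt_11_general (α := PKL k l) isChainSum_PKL m j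
end
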